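/- Darboux theorem for homogeneous presymplectic forms (even case): let ∇(x) = (w₁x₁,…,wₙxₙ) on ℝⁿ, let U ⊆ ℝⁿ be open, and let ω be a smooth closed 2-form on U, homogeneous of weight w ∈ ℝ with respect to ∇, whose rank is constant equal to 2r (i.e., for every x ∈ U the linear map v ↦ ω_x(v,·) has rank 2r). Let x₀ ∈ U be such that either ∇(x₀) = 0, or ∇(x₀) ≠ 0 and ω_{x₀}(∇(x₀),·) ≠ 0 (i.e., ∇(x₀) ∉ ker ω_{x₀}). Then there exist an open neighbourhood V ⊆ U of x₀ and smooth functions q¹,…,qʳ, p₁,…,pᵣ, z¹,…,z^{n−2r} on V whose differentials are linearly independent at every point of V, each homogeneous of some weight with respect to ∇, such that ω_x(u, v) = Σᵢ (Dpᵢ(x)(u)·Dqⁱ(x)(v) − Dpᵢ(x)(v)·Dqⁱ(x)(u)) for all x ∈ V and u, v ∈ ℝⁿ; that is, ω = Σᵢ dpᵢ ∧ dqⁱ in a system of homogeneous coordinates (qⁱ, pᵢ, zᵃ). -/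

import Mathlib

set_option linter.all false


namespace HD
section A
open scoped ContDiff Topology
open Set Filter
variable {E F G : Type} [NormedAddCommGroup E] [NormedSpace ℝ E]
  [NormedAddCommGroup F] [NormedSpace ℝ F] [NormedAddCommGroup G] [NormedSpace ℝ G]

/-- curves on the unit interval -/
abbrev Cv (E : Type) [TopologicalSpace E] := C(unitInterval, E)

/-- pointwise application as a continuous bilinear map -/
noncomputable def cvM : Cv (E →L[ℝ] F) →L[ℝ] Cv E →L[ℝ] Cv F :=
  LinearMap.mkContinuous₂
    (LinearMap.mk₂ ℝ (fun (A : Cv (E →L[ℝ] F)) (γ : Cv E) =>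
      (⟨fun t => A t (γ t), A.continuous.clm_apply γ.continuous⟩ : Cv F))
      (by intros; ext; simp) (by intros; ext; simp) (by intros; ext; simp)
      (by intros; ext; simp)) 1 (by
    intro A γ
    rw [ContinuousMap.norm_le _ (by positivity)]
    intro t
    simp only [LinearMap.mk₂_apply, ContinuousMap.coe_mk, one_mul]
    refine ((A t).le_opNorm _).trans ?_
    gcongr
    · exact A.norm_coe_le_norm t
    · exact γ.norm_coe_le_norm t)

@[simp] lemma cvM_apply (A : Cv (E →L[ℝ] F)) (γ : Cv E) (t : unitInterval) :
    cvM A γ t = A t (γ t) := rfl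

/-- post-composition -/
noncomputable def pc (f : C(E, F)) (γ : Cv E) : Cv F := f.comp γ

@[simp] lemma pc_apply (f : C(E, F)) (γ : Cv E) (t : unitInterval) : pc f γ t = f (γ t) := rfl

lemma pc_hasFDerivAt (f : C(E, F)) (f' : C(E, E →L[ℝ] F)) (h : ∀ x, HasFDerivAt f (f' x) x)
    (γ : Cv E) : HasFDerivAt (pc f) (cvM (pc f' γ)) γ := by
  have hc : Continuous (pc f' : Cv E → Cv (E →L[ℝ] F)) := ContinuousMap.continuous_postcomp f'
  rw [hasFDerivAt_iff_isLittleO_nhds_zero, Asymptotics.isLittleO_iff]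
  intro ε hε
  obtain ⟨δ, hδ, hd⟩ := Metric.continuous_iff.1 hc γ ε hε
  filter_upwards [Metric.ball_mem_nhds (0 : Cv E) hδ] with η hη
  rw [ContinuousMap.norm_le _ (by positivity)]
  intro t
  simp only [ContinuousMap.sub_apply, pc_apply, ContinuousMap.add_apply, cvM_apply]
  have hη' : ‖η t‖ < δ := (η.norm_coe_le_norm t).trans_lt (by simpa using hη)
  have := Convex.norm_image_sub_le_of_norm_hasFDerivWithin_le' (𝕜 := ℝ) (f := f) (C := ε)
    (s := Metric.ball (γ t) δ) (x := γ t) (y := γ t + η t) (f' := f') (φ := f' (γ t))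
    (fun x _ => (h x).hasFDerivWithinAt) (by
      intro x hx
      have h1 := hd (γ + ContinuousMap.const _ (x - γ t)) (by
        rw [dist_eq_norm, add_sub_cancel_left]
        refine lt_of_le_of_lt ((ContinuousMap.norm_le _ (norm_nonneg (x - γ t))).2 fun _ => le_rfl) ?_
        simpa [dist_eq_norm] using hx)
      rw [dist_eq_norm] at h1
      have h2 := (ContinuousMap.norm_coe_le_norm _ t).trans h1.le
      simpa using h2) (convex_ball _ _) (by simpa using hδ) (by simpa [dist_eq_norm] using hη')
  rw [add_sub_cancel_left] at this
  refine this.trans ?_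
  gcongr
  exact η.norm_coe_le_norm t

lemma pc_contDiff_nat (n : ℕ) : ∀ {F : Type} [NormedAddCommGroup F] [NormedSpace ℝ F]
    (f : C(E, F)), ContDiff ℝ ∞ f → ContDiff ℝ n (pc f) := by
  induction n with
  | zero =>
    intro F _ _ f hf
    exact contDiff_zero.2 (ContinuousMap.continuous_postcomp f)
  | succ n ih =>
    intro F _ _ f hf
    have hc : Continuous (fderiv ℝ f) := hf.continuous_fderiv (by simp)
    have hs : ContDiff ℝ ∞ (fderiv ℝ f) := hf.fderiv_right (by simp)
    push_cast
    rw [contDiff_succ_iff_hasFDerivAt]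
    refine ⟨fun γ => cvM (pc ⟨fderiv ℝ f, hc⟩ γ), ?_, fun γ => pc_hasFDerivAt f ⟨_, hc⟩ ?_ γ⟩
    · exact (ContinuousLinearMap.contDiff (𝕜 := ℝ) (E := Cv (E →L[ℝ] F))
        (F := Cv E →L[ℝ] Cv F) cvM).comp (ih ⟨fderiv ℝ f, hc⟩ hs)
    · intro x
      exact (hf.differentiable (by simp) x).hasFDerivAt

lemma pc_contDiff (f : C(E, F)) (hf : ContDiff ℝ ∞ f) : ContDiff ℝ ∞ (pc f) :=
  contDiff_infty.2 fun n => pc_contDiff_nat n f hf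

/-- constants -/
noncomputable def cvC : E →L[ℝ] Cv E :=
  LinearMap.mkContinuous
    { toFun := fun x => ContinuousMap.const _ x
      map_add' := by intros; ext; simp
      map_smul' := by intros; ext; simp } 1 (by
    intro x
    rw [ContinuousMap.norm_le _ (by positivity)]
    intro t; simp)

@[simp] lemma cvC_apply (x : E) (t : unitInterval) : cvC x t = x := rfl

/-- extension of a curve to the line -/
noncomputable def ext (γ : Cv E) : ℝ → E := IccExtend zero_le_one γ

lemma ext_cont (γ : Cv E) : Continuous (ext γ) := γ.continuous.Icc_extend'

@[simp] lemma ext_coe (γ : Cv E) (t : unitInterval) : ext γ t = γ t := by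
  simp [ext]

lemma ext_of_mem (γ : Cv E) {t : ℝ} (ht : t ∈ Icc (0:ℝ) 1) : ext γ t = γ ⟨t, ht⟩ := by
  simp [ext, IccExtend_of_mem _ _ ht]

/-- integration from zero -/
noncomputable def cvI [CompleteSpace E] : Cv E →L[ℝ] Cv E :=
  LinearMap.mkContinuous
    { toFun := fun γ => ⟨fun t => ∫ s in (0:ℝ)..t, ext γ s, by
        have := intervalIntegral.continuous_primitive
          (fun a b => (ext_cont γ).intervalIntegrable (μ := MeasureTheory.volume) a b) 0
        exact this.comp continuous_subtype_val⟩
      map_add' := by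
        intro a b; ext t
        simp only [ContinuousMap.coe_mk, ContinuousMap.add_apply]
        rw [← intervalIntegral.integral_add ((ext_cont a).intervalIntegrable _ _)
          ((ext_cont b).intervalIntegrable _ _)]
        rfl
      map_smul' := by
        intro c a; ext t
        simp only [ContinuousMap.coe_mk, ContinuousMap.smul_apply, RingHom.id_apply]
        rw [← intervalIntegral.integral_smul]
        rfl } 1 (by
    intro γ
    rw [ContinuousMap.norm_le _ (by positivity)]
    intro t
    have h := intervalIntegral.norm_integral_le_of_norm_le_const (a := 0) (b := (t:ℝ))
      (f := ext γ) (C := ‖γ‖) (fun x _ => γ.norm_coe_le_norm _)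
    refine h.trans ?_
    rw [one_mul, sub_zero, abs_of_nonneg t.2.1]
    exact mul_le_of_le_one_right (norm_nonneg _) t.2.2)

lemma cvI_apply [CompleteSpace E] (γ : Cv E) (t : unitInterval) :
    cvI γ t = ∫ s in (0:ℝ)..t, ext γ s := rfl

@[simp] lemma cvI_zero [CompleteSpace E] (γ : Cv E) : cvI γ 0 = 0 := by
  simp [cvI_apply]

/-- fundamental theorem of calculus in the form used below -/
lemma cvI_of_deriv [CompleteSpace E] (φ : ℝ → E) (γ : Cv E)
    (h : ∀ t ∈ Icc (0:ℝ) 1, HasDerivWithinAt φ (ext γ t) (Icc 0 1) t) (t : unitInterval) :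
    cvI γ t = φ t - φ 0 := by
  rw [cvI_apply]
  apply intervalIntegral.integral_eq_sub_of_hasDeriv_right_of_le t.2.1
  · intro s hs
    exact (h s ⟨hs.1, hs.2.trans t.2.2⟩).continuousWithinAt.mono (Icc_subset_Icc le_rfl t.2.2)
  · intro s hs
    have h1 : s ∈ Ioo (0:ℝ) 1 := ⟨hs.1, hs.2.trans_le t.2.2⟩
    exact ((h s ⟨h1.1.le, h1.2.le⟩).hasDerivAt (Icc_mem_nhds h1.1 h1.2)).hasDerivWithinAt
  · exact (ext_cont γ).intervalIntegrable _ _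

lemma cvI_hasDeriv [CompleteSpace E] (γ : Cv E) (t : ℝ) (ht : t ∈ Icc (0:ℝ) 1) :
    HasDerivWithinAt (ext (cvI γ)) (ext γ t) (Icc 0 1) t := by
  have h : HasDerivAt (fun u => ∫ s in (0:ℝ)..u, ext γ s) (ext γ t) t :=
    intervalIntegral.integral_hasDerivAt_right ((ext_cont γ).intervalIntegrable _ _)
      (ext_cont γ).stronglyMeasurable.stronglyMeasurableAtFilter (ext_cont γ).continuousAt
  refine h.hasDerivWithinAt.congr ?_ ?_
  · intro s hs
    rw [ext_of_mem _ hs]; rfl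
  · rw [ext_of_mem _ ht]; rfl

end A
end HD


namespace HD
section B
open scoped ContDiff Topology
open Set Filter
variable {E F G : Type} [NormedAddCommGroup E] [NormedSpace ℝ E]
  [NormedAddCommGroup F] [NormedSpace ℝ F] [NormedAddCommGroup G] [NormedSpace ℝ G]

/-- smooth in a neighbourhood -/
def Sm (f : E → F) (x₀ : E) : Prop := ∀ᶠ x in 𝓝 x₀, ContDiffAt ℝ ∞ f x

lemma Sm.congr {f g : E → F} {x₀ : E} (h : Sm f x₀) (hg : g =ᶠ[𝓝 x₀] f) : Sm g x₀ := by
  filter_upwards [h, hg.eventually_nhds] with x h1 h2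
  exact h1.congr_of_eventuallyEq h2

lemma Sm.self {f : E → F} {x₀ : E} (h : Sm f x₀) : ContDiffAt ℝ ∞ f x₀ := Eventually.self_of_nhds h

lemma Sm.continuousAt {f : E → F} {x₀ : E} (h : Sm f x₀) : ContinuousAt f x₀ := h.self.continuousAt

lemma Sm.diff {f : E → F} {x₀ : E} (h : Sm f x₀) : ∀ᶠ x in 𝓝 x₀, DifferentiableAt ℝ f x := by
  filter_upwards [h] with x hx using hx.differentiableAt (by simp)

lemma Sm.of_contDiff {f : E → F} (h : ContDiff ℝ ∞ f) (x₀ : E) : Sm f x₀ :=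
  Eventually.of_forall fun x => h.contDiffAt

lemma Sm.const (c : F) (x₀ : E) : Sm (fun _ => c) x₀ := .of_contDiff contDiff_const _

lemma Sm.comp {g : F → G} {f : E → F} {x₀ : E} (hg : Sm g (f x₀)) (hf : Sm f x₀) :
    Sm (fun x => g (f x)) x₀ := by
  filter_upwards [hf, hf.continuousAt.eventually hg] with x h1 h2
  exact ContDiffAt.comp x h2 h1

lemma Sm.add {f g : E → F} {x₀ : E} (hf : Sm f x₀) (hg : Sm g x₀) :
    Sm (fun x => f x + g x) x₀ := by
  filter_upwards [hf, hg] with x h1 h2 using h1.add h2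

lemma Sm.sub {f g : E → F} {x₀ : E} (hf : Sm f x₀) (hg : Sm g x₀) :
    Sm (fun x => f x - g x) x₀ := by
  filter_upwards [hf, hg] with x h1 h2 using h1.sub h2

lemma Sm.neg {f : E → F} {x₀ : E} (hf : Sm f x₀) :
    Sm (fun x => - f x) x₀ := by
  filter_upwards [hf] with x h1 using h1.neg

lemma Sm.smul {f : E → ℝ} {g : E → F} {x₀ : E} (hf : Sm f x₀) (hg : Sm g x₀) :
    Sm (fun x => f x • g x) x₀ := by
  filter_upwards [hf, hg] with x h1 h2 using h1.smul h2

lemma Sm.mul {f : E → ℝ} {g : E → ℝ} {x₀ : E} (hf : Sm f x₀) (hg : Sm g x₀) :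
    Sm (fun x => f x * g x) x₀ := by
  filter_upwards [hf, hg] with x h1 h2 using h1.mul h2

lemma Sm.inv {f : E → ℝ} {x₀ : E} (hf : Sm f x₀) (h0 : f x₀ ≠ 0) :
    Sm (fun x => (f x)⁻¹) x₀ := by
  filter_upwards [hf, hf.continuousAt.eventually_ne h0] with x h1 h2 using h1.inv h2

lemma Sm.exp {f : E → ℝ} {x₀ : E} (hf : Sm f x₀) :
    Sm (fun x => Real.exp (f x)) x₀ := by
  filter_upwards [hf] with x h1 using h1.exp

lemma Sm.clm_apply {f : E → F →L[ℝ] G} {g : E → F} {x₀ : E} (hf : Sm f x₀) (hg : Sm g x₀) :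
    Sm (fun x => f x (g x)) x₀ := by
  filter_upwards [hf, hg] with x h1 h2 using h1.clm_apply h2

lemma Sm.clm (L : F →L[ℝ] G) {g : E → F} {x₀ : E} (hg : Sm g x₀) :
    Sm (fun x => L (g x)) x₀ := by
  filter_upwards [hg] with x h2 using L.contDiff.contDiffAt.comp x h2

lemma Sm.fderiv {f : E → F} {x₀ : E} (hf : Sm f x₀) : Sm (fderiv ℝ f) x₀ := by
  filter_upwards [hf] with x h1 using h1.fderiv_right (by simp)

lemma Sm.sum {ι : Type} [Fintype ι] {f : ι → E → F} {x₀ : E} (hf : ∀ i, Sm (f i) x₀) :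
    Sm (fun x => ∑ i, f i x) x₀ := by
  filter_upwards [eventually_all.2 hf] with x h1
  exact ContDiffAt.sum fun i _ => h1 i

/-- a smooth germ has a globally smooth representative -/
lemma Sm.global [FiniteDimensional ℝ E] {f : E → F} {x₀ : E} (hf : Sm f x₀) :
    ∃ g : E → F, ContDiff ℝ ∞ g ∧ g =ᶠ[𝓝 x₀] f := by
  obtain ⟨δ, hδ, hb⟩ := Metric.eventually_nhds_iff_ball.1 hf
  let χ : ContDiffBump x₀ := ⟨δ/3, δ/2, by positivity, by linarith⟩
  refine ⟨fun x => χ x • f x, ?_, ?_⟩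
  · rw [contDiff_iff_contDiffAt]
    intro x
    by_cases hx : x ∈ Metric.ball x₀ δ
    · exact χ.contDiffAt.smul (hb x hx)
    · have : (fun x => χ x • f x) =ᶠ[𝓝 x] fun _ => 0 := by
        have h1 : x ∉ tsupport χ := by
          rw [χ.tsupport_eq]
          intro h
          exact hx (Metric.closedBall_subset_ball (by show δ/2 < δ; linarith) h)
        filter_upwards [(isClosed_tsupport χ).isOpen_compl.mem_nhds h1] with y hy
        rw [image_eq_zero_of_notMem_tsupport hy, zero_smul]
      exact contDiffAt_const.congr_of_eventuallyEq this
  · filter_upwards [χ.eventuallyEq_one] with x hx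
    simp [hx]

/-- The transport curves along `Ξ`. -/
theorem flow [FiniteDimensional ℝ E] (Q : E →L[ℝ] E) (Ξ : E → E →L[ℝ] E) (hΞ : ContDiff ℝ ∞ Ξ)
    (x₀ : E) : ∃ Γ : E → Cv E, Sm Γ x₀ ∧ Γ x₀ = cvC x₀ ∧
      ∀ᶠ x in 𝓝 x₀, 
        Γ x + cvI (cvM (pc ⟨Ξ, hΞ.continuous⟩ (Γ x)) (cvC (Q (x - x₀)))) = cvC x ∧
        Γ x 0 = x ∧
        ∀ u : E, ∀ η : Cv E, η 0 = u →
        (η + cvI (cvM (cvM (pc ⟨fderiv ℝ Ξ, hΞ.continuous_fderiv (by simp)⟩ (Γ x)) η)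
            (cvC (Q (x - x₀)))
          + cvM (pc ⟨Ξ, hΞ.continuous⟩ (Γ x)) (cvC (Q u))) = cvC u) → fderiv ℝ Γ x u = η := by
  have : CompleteSpace E := FiniteDimensional.complete ℝ E
  have hc := hΞ.continuous
  have hc' := hΞ.continuous_fderiv (by simp)
  set Ξc : C(E, E →L[ℝ] E) := ⟨Ξ, hc⟩
  set Ξc' : C(E, E →L[ℝ] E →L[ℝ] E) := ⟨fderiv ℝ Ξ, hc'⟩
  let ev0 : Cv E →L[ℝ] E := ContinuousMap.evalCLM ℝ 0
  let Θ : Cv E → Cv E := fun γ => γ + cvI (cvM (pc Ξc γ) (cvC (Q (ev0 γ - x₀))))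
  have hpc : ContDiff ℝ ∞ (pc Ξc) := pc_contDiff _ hΞ
  let Mc : Cv (E →L[ℝ] E) →L[ℝ] (Cv E →L[ℝ] Cv E) := cvM
  have hMc : ContDiff ℝ ∞ (fun A => Mc A) :=
    ContinuousLinearMap.contDiff (𝕜 := ℝ) (E := Cv (E →L[ℝ] E)) (F := Cv E →L[ℝ] Cv E) Mc
  have hM : ContDiff ℝ ∞ (fun γ : Cv E => (cvM (pc Ξc γ) : Cv E →L[ℝ] Cv E)) :=
    hMc.comp hpc
  have hΘ : ContDiff ℝ ∞ Θ := by
    refine contDiff_id.add ((cvI : Cv E →L[ℝ] Cv E).contDiff.comp (hM.clm_apply ?_))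
    exact (cvC : E →L[ℝ] Cv E).contDiff.comp (Q.contDiff.comp (ev0.contDiff.sub contDiff_const))
  let N : Cv E → (Cv E →L[ℝ] Cv E) := fun γ =>
    (cvI : Cv E →L[ℝ] Cv E) ∘L (((cvM (pc Ξc γ)) ∘L (cvC : E →L[ℝ] Cv E) ∘L Q ∘L ev0) +
      ((((cvM : Cv (E →L[ℝ] E) →L[ℝ] Cv E →L[ℝ] Cv E) ∘L 
        (cvM (pc Ξc' γ) : Cv E →L[ℝ] Cv (E →L[ℝ] E))).flip (cvC (Q (ev0 γ - x₀))))))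
  have hD : ∀ γ, HasFDerivAt Θ (ContinuousLinearMap.id ℝ _ + N γ) γ := by
    intro γ
    refine (hasFDerivAt_id γ).add ((cvI : Cv E →L[ℝ] Cv E).hasFDerivAt.comp γ ?_)
    have h1 : HasFDerivAt (pc Ξc) (cvM (pc Ξc' γ)) γ := pc_hasFDerivAt Ξc Ξc' (fun x =>
      (hΞ.differentiable (by simp) x).hasFDerivAt) γ
    have hMd : ∀ A, HasFDerivAt (fun A => Mc A) Mc A := fun A => Mc.hasFDerivAt
    have h2 : HasFDerivAt (fun γ : Cv E => (cvM (pc Ξc γ) : Cv E →L[ℝ] Cv E)) _ γ := 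
      HasFDerivAt.comp (F := Cv (E →L[ℝ] E)) (G := Cv E →L[ℝ] Cv E)
        (g := fun A => Mc A) (g' := Mc) γ (hMd (pc Ξc γ)) h1
    have h3 : HasFDerivAt (fun γ : Cv E => cvC (Q (ev0 γ - x₀)))
       ((cvC : E →L[ℝ] Cv E) ∘L Q ∘L ev0) γ :=
      (cvC : E →L[ℝ] Cv E).hasFDerivAt.comp γ (Q.hasFDerivAt.comp γ (ev0.hasFDerivAt.sub_const x₀))
    exact h2.clm_apply h3
  have hfd : fderiv ℝ Θ = fun γ => ContinuousLinearMap.id ℝ _ + N γ := funext fun γ => (hD γ).fderiv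
  set γ₀ : Cv E := cvC x₀ with hγ₀
  have hN0 : ∀ η, N γ₀ η = cvI (cvM (pc Ξc γ₀) (cvC (Q (η 0)))) := by
    intro η
    have : ev0 γ₀ - x₀ = 0 := sub_self _
    simp only [N, this, map_zero]
    simp [ev0]
  have hNN : ∀ η, N γ₀ (N γ₀ η) = 0 := by
    intro η
    rw [hN0 (N γ₀ η), hN0 η, cvI_zero]; simp
  let e₀ : Cv E ≃L[ℝ] Cv E := ContinuousLinearEquiv.equivOfInverse
    (ContinuousLinearMap.id ℝ _ + N γ₀) (ContinuousLinearMap.id ℝ _ - N γ₀)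
    (by intro η; simp [hNN]) (by intro η; simp [hNN])
  have hD0 : HasFDerivAt Θ (e₀ : Cv E →L[ℝ] Cv E) γ₀ := hD γ₀
  let e := ContDiffAt.toOpenPartialHomeomorph Θ hΘ.contDiffAt hD0 (by simp)
  have he : ∀ γ, e γ = Θ γ := fun γ => rfl
  have hΘ0 : Θ γ₀ = γ₀ := by
    have : ev0 γ₀ - x₀ = 0 := sub_self _
    simp only [Θ, this, map_zero, add_zero]
  have hsrc : γ₀ ∈ e.source := ContDiffAt.mem_toOpenPartialHomeomorph_source _ _ _
  have hsymm0 : e.symm γ₀ = γ₀ := by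
    have := e.left_inv hsrc
    rwa [he, hΘ0] at this
  have htgt : γ₀ ∈ e.target := by
    have := e.map_source hsrc
    rwa [he, hΘ0] at this
  let Γ : E → Cv E := fun x => e.symm (cvC x)
  have hcv : Continuous (fun x : E => (cvC x : Cv E)) := (cvC : E →L[ℝ] Cv E).continuous
  have hΓc : ContinuousAt Γ x₀ :=
    ContinuousAt.comp (f := fun x : E => (cvC x : Cv E)) (e.continuousAt_symm htgt) hcv.continuousAt
  have ev1 : ∀ᶠ x in 𝓝 x₀, (cvC x : Cv E) ∈ e.target :=
    hcv.continuousAt.eventually (e.open_target.mem_nhds htgt)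
  have ev2 : ∀ᶠ x in 𝓝 x₀, ∃ e' : Cv E ≃L[ℝ] Cv E,
      (e' : Cv E →L[ℝ] Cv E) = fderiv ℝ Θ (Γ x) := by
    have h1 : ContinuousAt (fun x => fderiv ℝ Θ (Γ x)) x₀ :=
      (hΘ.continuous_fderiv (by simp)).continuousAt.comp hΓc
    refine h1.eventually (p := fun L : Cv E →L[ℝ] Cv E => ∃ e' : Cv E ≃L[ℝ] Cv E,
      (e' : Cv E →L[ℝ] Cv E) = L) ?_
    have : fderiv ℝ Θ (Γ x₀) = e₀ := by
      show fderiv ℝ Θ (e.symm γ₀) = e₀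
      rw [hsymm0]; exact hD0.fderiv
    beta_reduce
    rw [this]
    exact ContinuousLinearEquiv.nhds e₀
  have hsm : Sm Γ x₀ := by
    filter_upwards [ev1, ev2] with x h1 h2
    obtain ⟨e', he'⟩ := h2
    have h3 : ContDiffAt ℝ ∞ e.symm (cvC x) := by
      refine e.contDiffAt_symm (f₀' := e') h1 ?_ hΘ.contDiffAt
      rw [he']
      exact (hΘ.differentiable (by simp) _).hasFDerivAt
    exact h3.comp x (cvC : E →L[ℝ] Cv E).contDiff.contDiffAt
  refine ⟨Γ, hsm, hsymm0, ?_⟩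
  have key : ∀ᶠ x in 𝓝 x₀, Θ (Γ x) = cvC x := by
    filter_upwards [ev1] with x h1
    exact e.right_inv h1
  filter_upwards [key, key.eventually_nhds, ev2, hsm.diff] with x h1 h1' h2 h3
  have h0 : Γ x 0 = x := by
    have := congrArg (fun γ : Cv E => γ 0) h1
    simpa [Θ] using this
  have h0' : ev0 (Γ x) = x := h0
  refine ⟨?_, h0, ?_⟩
  · simpa only [Θ, h0'] using h1
  · intro u η hη0 hη
    obtain ⟨e', he'⟩ := h2
    have hd1 : HasFDerivAt (fun x => Θ (Γ x)) (fderiv ℝ Θ (Γ x) ∘L fderiv ℝ Γ x) x :=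
      (hΘ.differentiable (by simp) _).hasFDerivAt.comp x h3.hasFDerivAt
    have hd2 : HasFDerivAt (fun x => Θ (Γ x)) (cvC : E →L[ℝ] Cv E) x :=
      (cvC : E →L[ℝ] Cv E).hasFDerivAt.congr_of_eventuallyEq h1'
    have h4 := congrArg (fun L : E →L[ℝ] Cv E => L u) (hd1.unique hd2)
    simp only [ContinuousLinearMap.comp_apply] at h4
    have h5 : fderiv ℝ Θ (Γ x) η = cvC u := by
      rw [hfd, ← hη]
      have : ev0 η = u := hη0
      have hNη : N (Γ x) η = cvI (cvM (pc Ξc (Γ x)) (cvC (Q (ev0 η)))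
        + cvM (cvM (pc Ξc' (Γ x)) η) (cvC (Q (ev0 (Γ x) - x₀)))) := rfl
      rw [this, h0', add_comm] at hNη
      rw [← hNη]
      rfl
    rw [← h5, ← he'] at h4
    exact e'.injective h4
end B
end HD


namespace HD
section C
open scoped ContDiff Topology
open Set Filter
variable {E F G : Type} [NormedAddCommGroup E] [NormedSpace ℝ E]
  [NormedAddCommGroup F] [NormedSpace ℝ F] [NormedAddCommGroup G] [NormedSpace ℝ G]

lemma ev_curve {Γ : E → Cv E} {x₀ : E} (hΓ : ContinuousAt Γ x₀) (h0 : Γ x₀ = cvC x₀)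
    {P : E → Prop} (hP : ∀ᶠ x in 𝓝 x₀, P x) : ∀ᶠ x in 𝓝 x₀, ∀ t, P (Γ x t) := by
  obtain ⟨δ, hδ, hb⟩ := Metric.eventually_nhds_iff_ball.1 hP
  have := hΓ.eventually (Metric.ball_mem_nhds _ hδ)
  filter_upwards [this] with x hx t
  apply hb
  rw [h0] at hx
  have h2 := (ContinuousMap.norm_coe_le_norm (Γ x - cvC x₀) t)
  rw [dist_eq_norm] at hx
  rw [Metric.mem_ball, dist_eq_norm]
  exact lt_of_le_of_lt h2 hx

theorem curves [FiniteDimensional ℝ E] (Q : E →L[ℝ] E) (hQ : ∀ v, Q (Q v) = Q v)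
    (Ξ : E → E →L[ℝ] E) (x₀ : E) (hΞ : Sm Ξ x₀) 
    (h1 : ∀ᶠ x in 𝓝 x₀, ∀ v, Q (Ξ x v) = Q v) : ∃ Γ : E → Cv E, Sm Γ x₀ ∧ Γ x₀ = cvC x₀ ∧
      ∀ᶠ x in 𝓝 x₀, Γ x 0 = x ∧ Q (Γ x 1 - x₀) = 0 ∧ (Q (x - x₀) = 0 → Γ x 1 = x) ∧
      (∀ t ∈ Icc (0:ℝ) 1, HasDerivWithinAt (ext (Γ x)) (-(Ξ (ext (Γ x) t) (Q (x - x₀)))) (Icc 0 1) t) ∧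
      (∀ u : E, ∀ φ : ℝ → E, φ 0 = u → (∀ t ∈ Icc (0:ℝ) 1, HasDerivWithinAt φ
        (-(fderiv ℝ Ξ (ext (Γ x) t) (φ t) (Q (x - x₀)) + Ξ (ext (Γ x) t) (Q u))) (Icc 0 1) t) →
        ∀ t : unitInterval, fderiv ℝ Γ x u t = φ t) := by
  have : CompleteSpace E := FiniteDimensional.complete ℝ E
  obtain ⟨Ξ', hΞ', heq⟩ := hΞ.global
  obtain ⟨Γ, hΓ, hΓ0, hf⟩ := flow Q Ξ' hΞ' x₀
  refine ⟨Γ, hΓ, hΓ0, ?_⟩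
  filter_upwards [hf, ev_curve hΓ.continuousAt hΓ0 (heq.eventually_nhds.and h1)] with x hx hcur
  obtain ⟨ha, hb, hc⟩ := hx
  set γ := Γ x
  set k := Q (x - x₀) with hk
  have hval : ∀ t, γ t = x - cvI (cvM (pc ⟨Ξ', hΞ'.continuous⟩ γ) (cvC k)) t := by
    intro t
    have := congrArg (fun c : Cv E => c t) ha
    simp only [ContinuousMap.add_apply, cvC_apply] at this
    rw [← this]; abel
  have hder : ∀ t ∈ Icc (0:ℝ) 1, HasDerivWithinAt (ext γ) (-(Ξ (ext γ t) k)) (Icc 0 1) t := by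
    intro t ht
    have h2 := (cvI_hasDeriv (cvM (pc ⟨Ξ', hΞ'.continuous⟩ γ) (cvC k)) t ht).const_sub x
    have h3 : ext (cvM (pc ⟨Ξ', hΞ'.continuous⟩ γ) (cvC k)) t = Ξ (ext γ t) k := by
      rw [ext_of_mem _ ht, ext_of_mem _ ht]
      simp [(hcur ⟨t, ht⟩).1.self_of_nhds]
    rw [h3] at h2
    refine h2.congr ?_ ?_
    · intro s hs
      rw [ext_of_mem _ hs, ext_of_mem _ hs, hval]
    · rw [ext_of_mem _ ht, ext_of_mem _ ht, hval]
  refine ⟨hb, ?_, ?_, hder, ?_⟩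
  · have h2 := cvI_of_deriv (fun t => Q (ext γ t)) (cvC (-k)) (by
      intro t ht
      have h3 := Q.hasFDerivAt.comp_hasDerivWithinAt t (hder t ht)
      refine h3.congr_deriv ?_
      rw [ext_of_mem _ ht, ext_of_mem _ ht, cvC_apply, map_neg, (hcur ⟨t, ht⟩).2, hk, hQ]) 1
    have h4 : cvI (cvC (-k)) (1 : unitInterval) = -k := by
      have := cvI_of_deriv (fun t : ℝ => t • (-k)) (cvC (-k)) (by
        intro t ht
        rw [ext_of_mem _ ht, cvC_apply]
        simpa using ((hasDerivAt_id t).smul_const (-k)).hasDerivWithinAt) 1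
      simpa using this
    rw [h4] at h2
    have e1 : ext γ ((1 : unitInterval) : ℝ) = γ 1 := ext_coe _ _
    have e0 : ext γ (0:ℝ) = x := by
      have := ext_coe γ 0
      rw [hb] at this; simpa using this
    simp only [e1, e0] at h2
    rw [map_sub]
    have : Q (γ 1) = Q x - k := by rw [sub_eq_add_neg, h2]; abel
    rw [this, hk, map_sub]; abel
  · intro h0
    rw [hval, h0]; simp
  · intro u φ h0 hφ t
    have hcφ : ContinuousOn φ (Icc 0 1) := fun t ht => (hφ t ht).continuousWithinAt
    let η : Cv E := ⟨fun t => φ t, hcφ.restrict⟩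
    have := hc u η h0 (by
      ext t
      have h2 := cvI_of_deriv (fun t => - φ t) (cvM (cvM (pc ⟨fderiv ℝ Ξ', hΞ'.continuous_fderiv (by simp)⟩ γ) η)
            (cvC k) + cvM (pc ⟨Ξ', hΞ'.continuous⟩ γ) (cvC (Q u))) (by
        intro t ht
        refine (hφ t ht).neg.congr_deriv ?_
        rw [ext_of_mem _ ht, ext_of_mem _ ht]
        have e : Ξ' =ᶠ[𝓝 (γ ⟨t, ht⟩)] Ξ := (hcur ⟨t, ht⟩).1
        have eη : η ⟨t, ht⟩ = φ t := rfl
        simp [e.fderiv_eq, e.self_of_nhds, eη]) t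
      rw [ContinuousMap.add_apply, h2, cvC_apply]
      have eη : η t = φ t := rfl
      rw [eη, h0]; abel)
    rw [this]; rfl

theorem uniq [FiniteDimensional ℝ E] (Q : E →L[ℝ] E) (hQ : ∀ v, Q (Q v) = Q v)
    (Ξ : E → E →L[ℝ] E) (x₀ : E) (hΞ : Sm Ξ x₀) 
    (h1 : ∀ᶠ x in 𝓝 x₀, ∀ v, Q (Ξ x v) = Q v) (h : E → ℝ) (hh : Sm h x₀)
    (hd : ∀ᶠ x in 𝓝 x₀, ∀ v, fderiv ℝ h x (Ξ x v) = 0)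
    (h0 : ∀ᶠ x in 𝓝 x₀, Q (x - x₀) = 0 → h x = 0) : ∀ᶠ x in 𝓝 x₀, h x = 0 := by
  obtain ⟨Γ, hΓ, hΓ0, hf⟩ := curves Q hQ Ξ x₀ hΞ h1
  filter_upwards [hf, ev_curve hΓ.continuousAt hΓ0 ((hh.diff.and hd).and h0)] with x hx hcur
  obtain ⟨ha, hb, -, hc, -⟩ := hx
  have h2 := cvI_of_deriv (fun t => h (ext (Γ x) t)) (cvC 0) (by
      intro t ht
      have hct := (hcur ⟨t, ht⟩).1
      rw [← ext_of_mem (Γ x) ht] at hct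
      have h3 := hct.1.hasFDerivAt.comp_hasDerivWithinAt t (hc t ht)
      refine h3.congr_deriv ?_
      rw [map_neg, hct.2, neg_zero, ext_of_mem _ ht, cvC_apply]) 1
  have e1 : ext (Γ x) ((1 : unitInterval) : ℝ) = Γ x 1 := ext_coe _ _
  have e0 : ext (Γ x) (0:ℝ) = x := by
      have := ext_coe (Γ x) 0
      rw [ha] at this; simpa using this
  simp only [e1, e0] at h2
  have h5 := (hcur 1).2 hb
  rw [h5] at h2
  simpa using h2.symm

theorem solver [FiniteDimensional ℝ E] (Q : E →L[ℝ] E) (hQ : ∀ v, Q (Q v) = Q v)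
    (Ξ : E → E →L[ℝ] E) (g : E → E →L[ℝ] ℝ) (x₀ : E) (hΞ : Sm Ξ x₀) (hg : Sm g x₀)
    (h1 : ∀ᶠ x in 𝓝 x₀, ∀ v, Q (Ξ x v) = Q v)
    (h2 : ∀ᶠ x in 𝓝 x₀, ∀ v, Ξ x (Q v) = Ξ x v)
    (h2' : ∀ᶠ x in 𝓝 x₀, ∀ v, g x (Q v) = g x v)
    (h3 : ∀ᶠ x in 𝓝 x₀, ∀ v₁ v₂, fderiv ℝ Ξ x (Ξ x v₁) v₂ = fderiv ℝ Ξ x (Ξ x v₂) v₁)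
    (h4 : ∀ᶠ x in 𝓝 x₀, ∀ v₁ v₂, fderiv ℝ g x (Ξ x v₁) v₂ = fderiv ℝ g x (Ξ x v₂) v₁)
    (f₀ : E → ℝ) (hf₀ : ContDiff ℝ ∞ f₀) :
    ∃ f : E → ℝ, Sm f x₀ ∧ (∀ᶠ x in 𝓝 x₀, ∀ v, fderiv ℝ f x (Ξ x v) = g x v) ∧
      ∀ᶠ x in 𝓝 x₀, Q (x - x₀) = 0 → f x = f₀ x := by
  obtain ⟨Γ, hΓ, hΓ0, hf⟩ := curves Q hQ Ξ x₀ hΞ h1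
  obtain ⟨g', hg', heq⟩ := hg.global
  let gc : C(E, E →L[ℝ] ℝ) := ⟨g', hg'.continuous⟩
  let gc' : C(E, E →L[ℝ] E →L[ℝ] ℝ) := ⟨fderiv ℝ g', hg'.continuous_fderiv (by simp)⟩
  let ev1 : Cv E →L[ℝ] E := ContinuousMap.evalCLM ℝ 1
  let ev1' : Cv ℝ →L[ℝ] ℝ := ContinuousMap.evalCLM ℝ 1
  let Mc : Cv (E →L[ℝ] ℝ) →L[ℝ] (Cv E →L[ℝ] Cv ℝ) := cvM
  have hMc : ContDiff ℝ ∞ (fun A => Mc A) :=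
    ContinuousLinearMap.contDiff (𝕜 := ℝ) (E := Cv (E →L[ℝ] ℝ)) (F := Cv E →L[ℝ] Cv ℝ) Mc
  have hpc : ContDiff ℝ ∞ (pc gc) := pc_contDiff _ hg'
  let kf : E → Cv E := fun x => cvC (Q (x - x₀))
  have hkf : ContDiff ℝ ∞ kf :=
    (cvC : E →L[ℝ] Cv E).contDiff.comp (Q.contDiff.comp (contDiff_id.sub contDiff_const))
  let L : Cv ℝ →L[ℝ] ℝ := ev1' ∘L cvI
  refine ⟨fun x => f₀ (ev1 (Γ x)) + L (Mc (pc gc (Γ x)) (kf x)), ?_, ?_, ?_⟩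
  · refine Sm.add ?_ (Sm.clm L (Sm.clm_apply ?_ (Sm.of_contDiff hkf _)))
    · exact Sm.comp (g := f₀) (Sm.of_contDiff hf₀ _) (Sm.clm ev1 hΓ)
    · exact Sm.comp (g := fun γ => Mc (pc gc γ)) (Sm.of_contDiff (hMc.comp hpc) _) hΓ
  · filter_upwards [hf, ev_curve hΓ.continuousAt hΓ0 (((((hΞ.diff.and h3).and h4).and h2).and 
      heq.eventually_nhds).and (h2'.and hg.diff)), hΓ.diff, h1] with x hx hcur hdΓ h1x v
    obtain ⟨ha, hb, -, hc, hη⟩ := hx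
    set γ := Γ x
    set k := Q (x - x₀) with hk
    have e1 : ext γ ((1 : unitInterval) : ℝ) = γ 1 := ext_coe _ _
    have e0 : ext γ (0:ℝ) = x := by
        have := ext_coe γ 0
        rw [ha] at this; simpa using this
    have hηv : ∀ t : unitInterval, fderiv ℝ Γ x (Ξ x v) t = (1 - (t:ℝ)) • Ξ (γ t) v := by
      intro t
      have h5 := hη (Ξ x v) (fun t => (1 - t) • Ξ (ext γ t) v) (by simp [e0]) (by
        intro t ht
        have hct := hcur ⟨t, ht⟩
        rw [← ext_of_mem γ ht] at hct
        obtain ⟨⟨⟨⟨⟨i1, i2⟩, i3⟩, i4⟩, i5⟩, i6⟩ := hct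
        have d1 := i1.hasFDerivAt.comp_hasDerivWithinAt t (hc t ht)
        have d2 := d1.clm_apply (hasDerivWithinAt_const t (Icc 0 1) v)
        have d3 := ((hasDerivAt_id t).const_sub 1).hasDerivWithinAt (s := Icc 0 1)
        refine (d3.smul d2).congr_deriv ?_
        simp only [id, Function.comp, map_neg, map_smul, ContinuousLinearMap.neg_apply,
          ContinuousLinearMap.smul_apply, map_zero, add_zero, smul_neg, h1x, i4, i2 v k]
        module) t
      rw [h5, ext_coe]
    have d1 : HasFDerivAt (fun x => f₀ (ev1 (Γ x))) (fderiv ℝ f₀ (ev1 (Γ x)) ∘L ev1 ∘L fderiv ℝ Γ x) x :=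
      (hf₀.differentiable (by simp) _).hasFDerivAt.comp x (ev1.hasFDerivAt.comp x hdΓ.hasFDerivAt)
    have d2 : HasFDerivAt (pc gc) (cvM (pc gc' γ)) γ := pc_hasFDerivAt gc gc' (fun x =>
      (hg'.differentiable (by simp) x).hasFDerivAt) γ
    have d3 : HasFDerivAt (fun x => pc gc (Γ x)) _ x := d2.comp x hdΓ.hasFDerivAt
    have hMd : ∀ A, HasFDerivAt (fun A => Mc A) Mc A := fun A => Mc.hasFDerivAt
    have d4 : HasFDerivAt (fun x => Mc (pc gc (Γ x))) _ x :=
      HasFDerivAt.comp (F := Cv (E →L[ℝ] ℝ)) (G := Cv E →L[ℝ] Cv ℝ)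
        (g := fun A => Mc A) (g' := Mc) x (hMd (pc gc γ)) d3
    have d5 : HasFDerivAt kf ((cvC : E →L[ℝ] Cv E) ∘L Q) x :=
      (cvC : E →L[ℝ] Cv E).hasFDerivAt.comp x (Q.hasFDerivAt.comp x ((hasFDerivAt_id x).sub_const x₀))
    have d6 := d1.add (L.hasFDerivAt.comp x (d4.clm_apply d5))
    have d7 : fderiv ℝ (fun x => f₀ (ev1 (Γ x)) + L (Mc (pc gc (Γ x)) (kf x))) x (Ξ x v) = 
      fderiv ℝ f₀ (ev1 γ) (fderiv ℝ Γ x (Ξ x v) 1) + cvI (cvM (pc gc γ) (cvC (Q (Ξ x v))) + 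
        cvM (cvM (pc gc' γ) (fderiv ℝ Γ x (Ξ x v))) (cvC k)) 1 := by
      refine (congrArg (fun L : E →L[ℝ] ℝ => L (Ξ x v)) d6.fderiv).trans ?_
      rfl
    rw [d7, hηv]
    have h5 := cvI_of_deriv (fun t => -((1 - t) * g (ext γ t) v))  (cvM (pc gc γ) (cvC (Q (Ξ x v))) + 
        cvM (cvM (pc gc' γ) (fderiv ℝ Γ x (Ξ x v))) (cvC k)) (by
        intro t ht
        have hct := hcur ⟨t, ht⟩
        rw [ext_of_mem _ ht]
        simp only [ContinuousMap.add_apply, cvM_apply, hηv, pc_apply, cvC_apply]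
        rw [← ext_of_mem γ ht] at hct ⊢
        obtain ⟨⟨⟨⟨⟨i1, i2⟩, i3⟩, i4⟩, i5⟩, i6, i7⟩ := hct
        have d1 := i7.hasFDerivAt.comp_hasDerivWithinAt t (hc t ht)
        have d2 := d1.clm_apply (hasDerivWithinAt_const t (Icc 0 1) v)
        have d3 := ((hasDerivAt_id t).const_sub 1).hasDerivWithinAt (s := Icc 0 1)
        refine ((d3.mul d2).neg).congr_deriv ?_
        have j1 : gc (ext γ t) = g (ext γ t) := i5.self_of_nhds
        have j2 : gc' (ext γ t) = fderiv ℝ g (ext γ t) := Filter.EventuallyEq.fderiv_eq i5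
        rw [j1, j2]
        simp only [id, Function.comp, map_neg, map_smul, ContinuousLinearMap.neg_apply,
          ContinuousLinearMap.smul_apply, map_zero, add_zero, smul_neg, h1x, i6, i3 v k, smul_eq_mul]
        ring) 1
    rw [h5, e0]
    simp
  · filter_upwards [hf] with x hx h0
    obtain ⟨ha, hb, hc, -⟩ := hx
    have : ev1 (Γ x) = x := hc h0
    have hk0 : kf x = 0 := by simp only [kf, h0, map_zero]
    simp only [this, hk0, map_zero, add_zero]
end C
end HD


namespace HD
section D
open scoped ContDiff Topology
open Set Filter
variable {E F G : Type} [NormedAddCommGroup E] [NormedSpace ℝ E]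
  [NormedAddCommGroup F] [NormedSpace ℝ F] [NormedAddCommGroup G] [NormedSpace ℝ G]

lemma sm_symm {f : E → F} {x₀ : E} (hf : Sm f x₀) :
    ∀ᶠ x in 𝓝 x₀, ∀ u v, fderiv ℝ (fderiv ℝ f) x u v = fderiv ℝ (fderiv ℝ f) x v u := by
  filter_upwards [hf] with x hx u v
  have := hx.isSymmSndFDerivAt (by simp; exact WithTop.coe_le_coe.2 le_top)
  exact this u v

lemma ev_fderiv_app {A : E → E →L[ℝ] F} {c : E → F} {b : E → E} {x : E}
    {A' : E →L[ℝ] E →L[ℝ] F} {b' : E →L[ℝ] E} {c' : E →L[ℝ] F}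
    (hA : HasFDerivAt A A' x) (hb : HasFDerivAt b b' x) (hc : HasFDerivAt c c' x)
    (h : ∀ᶠ y in 𝓝 x, A y (b y) = c y) (u : E) : A' u (b x) + A x (b' u) = c' u := by
  have h1 : HasFDerivAt c _ x := (hA.clm_apply hb).congr_of_eventuallyEq (h.mono fun y hy => hy.symm)
  have h2 := congrArg (fun L : E →L[ℝ] F => L u) (h1.unique hc)
  simp at h2
  rw [← h2]; abel

lemma fderiv_on_S (Q : E →L[ℝ] E) (f f₀ : E → ℝ) (x₀ : E) (hf : Sm f x₀) (hf₀ : ContDiff ℝ ∞ f₀)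
    (h : ∀ᶠ x in 𝓝 x₀, Q (x - x₀) = 0 → f x = f₀ x) :
    ∀ᶠ x in 𝓝 x₀, Q (x - x₀) = 0 → ∀ u, Q u = 0 → fderiv ℝ f x u = fderiv ℝ f₀ x u := by
  filter_upwards [hf.diff, h.eventually_nhds] with x h1 h2 h3 u hu
  have l : HasDerivAt (fun t : ℝ => x + t • u) u 0 := by
    simpa using ((hasDerivAt_id (0:ℝ)).smul_const u).const_add x
  have l0 : x + (0:ℝ) • u = x := by simp
  have d1 : HasDerivAt (fun t : ℝ => f (x + t • u)) (fderiv ℝ f x u) 0 :=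
    HasFDerivAt.comp_hasDerivAt_of_eq (f := fun t : ℝ => x + t • u) (0:ℝ) h1.hasFDerivAt l l0.symm
  have d2 : HasDerivAt (fun t : ℝ => f₀ (x + t • u)) (fderiv ℝ f₀ x u) 0 :=
    HasFDerivAt.comp_hasDerivAt_of_eq (f := fun t : ℝ => x + t • u) (0:ℝ)
      (hf₀.differentiable (by simp) x).hasFDerivAt l l0.symm
  refine d1.unique (d2.congr_of_eventuallyEq ?_)
  have : Tendsto (fun t : ℝ => x + t • u) (𝓝 0) (𝓝 x) := by
    have := l.continuousAt.tendsto
    rwa [l0] at this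
  filter_upwards [this.eventually h2] with t ht
  apply ht
  have : x + t • u - x₀ = (x - x₀) + t • u := by abel
  rw [this, map_add, map_smul, h3, hu]; simp

theorem homog [FiniteDimensional ℝ E] (Q : E →L[ℝ] E) (hQ : ∀ v, Q (Q v) = Q v)
    (Ξ : E → E →L[ℝ] E) (g : E → E →L[ℝ] ℝ) (x₀ : E) (hΞ : Sm Ξ x₀) (hg : Sm g x₀)
    (h1 : ∀ᶠ x in 𝓝 x₀, ∀ v, Q (Ξ x v) = Q v)
    (f f₀ : E → ℝ) (hf : Sm f x₀) (hf₀ : ContDiff ℝ ∞ f₀) 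
    (hfΞ : ∀ᶠ x in 𝓝 x₀, ∀ v, fderiv ℝ f x (Ξ x v) = g x v)
    (hff : ∀ᶠ x in 𝓝 x₀, Q (x - x₀) = 0 → f x = f₀ x)
    (W : E →L[ℝ] E) (hWQ : ∀ v, W (Q v) = Q (W v)) (hW0 : W x₀ = 0) (μ : ℝ)
    (hhom : ∀ x, fderiv ℝ f₀ x (W x) = μ * f₀ x)
    (hZ : ∀ᶠ x in 𝓝 x₀, ∀ v, ∃ z, W (Ξ x v) - fderiv ℝ Ξ x (W x) v = Ξ x z ∧
      g x z = μ * g x v - fderiv ℝ g x (W x) v) :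
    ∀ᶠ x in 𝓝 x₀, fderiv ℝ f x (W x) = μ * f x := by
  have key := uniq Q hQ Ξ x₀ hΞ h1 (fun x => fderiv ℝ f x (W x) - μ * f x)
    ((hf.fderiv.clm_apply (Sm.of_contDiff W.contDiff _)).sub ((Sm.const μ _).mul hf)) ?_ ?_
  · filter_upwards [key] with x hx
    linarith
  · filter_upwards [hf.diff, hf.fderiv.diff, sm_symm hf, hfΞ.eventually_nhds, hΞ.diff, hg.diff, hZ]
      with x f1 f2 f3 f4 f5 f6 f7 v
    obtain ⟨z, z1, z2⟩ := f7 v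
    have d1 := ((f2.hasFDerivAt.clm_apply W.hasFDerivAt).sub (f1.hasFDerivAt.const_mul μ))
    have d2 : fderiv ℝ (fun x => fderiv ℝ f x (W x) - μ * f x) x (Ξ x v) =
      fderiv ℝ (fderiv ℝ f) x (Ξ x v) (W x) + fderiv ℝ f x (W (Ξ x v)) - μ * fderiv ℝ f x (Ξ x v) := by
      refine (congrArg (fun L : E →L[ℝ] ℝ => L (Ξ x v)) d1.fderiv).trans ?_
      simp; ring
    have d3 := ev_fderiv_app f2.hasFDerivAt (f5.hasFDerivAt.clm_apply (hasFDerivAt_const v x))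
      (f6.hasFDerivAt.clm_apply (hasFDerivAt_const v x)) (f4.mono fun y hy => hy v) (W x)
    simp at d3
    have d4 := congrArg (fderiv ℝ f x) z1
    rw [map_sub, f4.self_of_nhds, z2] at d4
    rw [d2, f3, f4.self_of_nhds]
    linarith
  · filter_upwards [fderiv_on_S Q f f₀ x₀ hf hf₀ hff, hff] with x h2 h3 h4
    have : Q (W x) = 0 := by
      have : Q (W x) = W (Q (x - x₀)) := by rw [hWQ, map_sub, hW0, sub_zero]
      rw [this, h4, map_zero]
    rw [h2 h4 _ this, h3 h4, hhom, sub_self]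
end D
end HD


namespace HD
section E
open scoped ContDiff Topology
open Set Filter
variable {E F G : Type} [NormedAddCommGroup E] [NormedSpace ℝ E]
  [NormedAddCommGroup F] [NormedSpace ℝ F] [NormedAddCommGroup G] [NormedSpace ℝ G]

theorem kernel_field [FiniteDimensional ℝ E] [FiniteDimensional ℝ F] (B : E → E →L[ℝ] F) (x₀ : E)
    (hB : Sm B x₀) (Q : E →L[ℝ] E) (hQ : ∀ v, Q (Q v) = Q v)
    (h0 : ∀ v, B x₀ v = 0 → Q v = 0 → v = 0)
    (hd : ∀ᶠ x in 𝓝 x₀, Module.finrank ℝ (LinearMap.range Q.toLinearMap) ≤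
      Module.finrank ℝ (LinearMap.ker (B x).toLinearMap)) :
    ∃ Ξ : E → E →L[ℝ] E, Sm Ξ x₀ ∧ ∀ᶠ x in 𝓝 x₀, (∀ v, Q (Ξ x v) = Q v) ∧
      (∀ v, Ξ x (Q v) = Ξ x v) ∧ (∀ v, B x (Ξ x v) = 0) ∧ (∀ v, B x v = 0 → Q v = 0 → v = 0) := by
  have : CompleteSpace E := FiniteDimensional.complete ℝ E
  obtain ⟨C', hC'⟩ := LinearMap.exists_leftInverse_of_injective
    ((B x₀).toLinearMap ∘ₗ (LinearMap.ker Q.toLinearMap).subtype) (by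
      rw [LinearMap.ker_eq_bot']
      rintro ⟨v, hv⟩ h
      have := h0 v h hv
      simpa using this)
  let C : F →L[ℝ] E := ((LinearMap.ker Q.toLinearMap).subtype ∘ₗ C').toContinuousLinearMap
  have hQC : ∀ y, Q (C y) = 0 := fun y => (C' y).2
  have hCB : ∀ v, Q v = 0 → C (B x₀ v) = v := by
    intro v hv
    have := congrArg (fun L => ((L ⟨v, hv⟩ : LinearMap.ker Q.toLinearMap) : E)) hC'
    exact this
  let L : E → E →L[ℝ] E := fun x => C ∘L B x + Q
  have hL : Sm L x₀ := (Sm.clm (ContinuousLinearMap.compL ℝ E F E C) hB).add (Sm.const Q _)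
  have hQL : ∀ x v, Q (L x v) = Q v := by
    intro x v
    simp [L, hQC, hQ]
  have hinj : ∀ v, L x₀ v = 0 → v = 0 := by
    intro v hv
    have h1 : Q v = 0 := by rw [← hQL x₀, hv, map_zero]
    have h2 : C (B x₀ v) = 0 := by simpa [L, h1] using hv
    rw [← hCB v h1, h2]
  let e₀ : E ≃L[ℝ] E := (LinearEquiv.ofInjectiveEndo (L x₀).toLinearMap (by
    rw [← LinearMap.ker_eq_bot, LinearMap.ker_eq_bot']; exact hinj)).toContinuousLinearEquiv
  have he₀ : (e₀ : E →L[ℝ] E) = L x₀ := by ext v; rfl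
  have hev : ∀ᶠ x in 𝓝 x₀, ∃ e' : E ≃L[ℝ] E, (e' : E →L[ℝ] E) = L x := by
    refine hL.continuousAt.eventually (p := fun L : E →L[ℝ] E => ∃ e' : E ≃L[ℝ] E,
      (e' : E →L[ℝ] E) = L) ?_
    rw [← he₀]
    exact ContinuousLinearEquiv.nhds e₀
  have hsm : Sm (fun x => ContinuousLinearMap.inverse (L x)) x₀ := by
    filter_upwards [hL, hev] with x h1 h2
    obtain ⟨e', he'⟩ := h2
    have h3 : ContDiffAt ℝ ∞ ContinuousLinearMap.inverse (L x) := by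
      rw [← he']; exact contDiffAt_map_inverse e'
    exact h3.comp x h1
  refine ⟨fun x => ContinuousLinearMap.inverse (L x) ∘L Q,
    Sm.clm ((ContinuousLinearMap.compL ℝ E E E).flip Q) hsm, ?_⟩
  filter_upwards [hev, hd] with x h1 h2
  obtain ⟨e', he'⟩ := h1
  have hinv : ContinuousLinearMap.inverse (L x) = (e'.symm : E →L[ℝ] E) := by
    rw [← he', ContinuousLinearMap.inverse_equiv]
  have hli : ∀ v, L x (ContinuousLinearMap.inverse (L x) v) = v := by
    intro v; rw [hinv, ← he']; simp
  have hlinj : ∀ v, L x v = 0 → v = 0 := by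
    intro v; rw [← he']; simp
  have p1 : ∀ v, Q (ContinuousLinearMap.inverse (L x) (Q v)) = Q v := by
    intro v
    rw [← hQL x, hli, hQ]
  refine ⟨p1, fun v => by simp [hQ], ?_, ?_⟩
  · have hsub : LinearMap.ker (B x).toLinearMap ≤ LinearMap.ker (C ∘L B x).toLinearMap := by
      intro v hv
      have : B x v = 0 := hv
      simp [this]
    have hle : Module.finrank ℝ (LinearMap.ker (C ∘L B x).toLinearMap) ≤
        Module.finrank ℝ (LinearMap.range Q.toLinearMap) := by
      have hm : ∀ v ∈ LinearMap.ker (C ∘L B x).toLinearMap, Q v ∈ LinearMap.range Q.toLinearMap :=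
        fun v _ => ⟨v, rfl⟩
      refine LinearMap.finrank_le_finrank_of_injective
        (f := (Q.toLinearMap).restrict hm) ?_
      rw [← LinearMap.ker_eq_bot, LinearMap.ker_eq_bot']
      rintro ⟨v, hv⟩ h
      have hq : Q v = 0 := congrArg Subtype.val h
      have hc : C (B x v) = 0 := hv
      have : v = 0 := hlinj v (by simp [L, hq, hc])
      exact Subtype.ext this
    have heq := Submodule.eq_of_le_of_finrank_le hsub (hle.trans h2)
    intro v
    have : ContinuousLinearMap.inverse (L x) (Q v) ∈ LinearMap.ker (C ∘L B x).toLinearMap := by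
      have h3 := hli (Q v)
      have h4 : L x (ContinuousLinearMap.inverse (L x) (Q v)) =
        C (B x (ContinuousLinearMap.inverse (L x) (Q v))) + Q (ContinuousLinearMap.inverse (L x) (Q v)) := rfl
      rw [h4, p1] at h3
      exact add_eq_right.1 h3
    rw [← heq] at this
    exact this
  · intro v hb hq
    exact hlinj v (by simp [L, hq, hb])

/-- diagonal maps -/
noncomputable def dg {n : ℕ} (s : Fin n → ℝ) : (Fin n → ℝ) →L[ℝ] (Fin n → ℝ) :=
  ContinuousLinearMap.pi fun i => s i • ContinuousLinearMap.proj i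

@[simp] lemma dg_apply {n : ℕ} (s v : Fin n → ℝ) : dg s v = fun j => s j * v j := rfl

lemma coordQ {n : ℕ} (K : Submodule ℝ (Fin n → ℝ)) : ∃ s : Fin n → ℝ, (∀ i, s i = 0 ∨ s i = 1) ∧
    (∀ v ∈ K, dg s v = 0 → v = 0) ∧
    Module.finrank ℝ (LinearMap.range (dg s).toLinearMap) ≤ Module.finrank ℝ K := by
  classical
  obtain ⟨κ, a, ha, hsp, hli⟩ := exists_linearIndependent' ℝ
    (fun i : Fin n => K.mkQ (Pi.single i (1:ℝ)))
  haveI : Finite κ := Finite.of_injective a ha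
  haveI := Fintype.ofFinite κ
  let s : Fin n → ℝ := fun i => if i ∈ range a then 0 else 1
  have hs : ∀ k, s (a k) = 0 := fun k => by simp [s]
  have hs' : ∀ i, i ∉ range a → s i = 1 := fun i hi => if_neg hi
  refine ⟨s, fun i => ?_, ?_, ?_⟩
  · by_cases h : i ∈ range a <;> simp only [s, h, if_true, if_false] <;> simp
  · intro v hv h
    have hv0 : ∀ i, i ∉ range a → v i = 0 := by
      intro i hi
      have := congrFun h i
      simpa [hs' i hi] using this
    have hv1 : v = ∑ k, v (a k) • (Pi.single (a k) (1:ℝ) : Fin n → ℝ) := by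
      ext i
      rw [Finset.sum_apply]
      by_cases hi : i ∈ range a
      · obtain ⟨k, rfl⟩ := hi
        rw [Finset.sum_eq_single k]
        · simp
        · intro b _ hb
          have : a k ≠ a b := fun h => hb (ha h).symm
          simp [this]
        · simp
      · rw [hv0 i hi]
        symm
        apply Finset.sum_eq_zero
        intro k _
        have : i ≠ a k := fun h => hi ⟨k, h.symm⟩
        simp [this]
    have h2 : ∑ k, v (a k) • K.mkQ (Pi.single (a k) (1:ℝ)) = 0 := by
      have : K.mkQ v = 0 := by simpa using hv
      rw [hv1, map_sum] at this
      simpa only [map_smul] using this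
    have h3 := Fintype.linearIndependent_iff.1 hli (fun k => v (a k)) h2
    rw [hv1]
    simp [h3]
  · have hle : LinearMap.range (dg s).toLinearMap ≤ K.map (dg s).toLinearMap := by
      rintro _ ⟨v, rfl⟩
      have hmem : K.mkQ v ∈ Submodule.span ℝ (range ((fun i : Fin n => K.mkQ (Pi.single i (1:ℝ))) ∘ a)) := by
        rw [hsp]
        have : v = ∑ i, v i • (Pi.single i (1:ℝ) : Fin n → ℝ) := pi_eq_sum_univ' v
        rw [this, map_sum]
        refine Submodule.sum_mem _ fun i _ => ?_
        rw [map_smul]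
        exact Submodule.smul_mem _ _ (Submodule.subset_span ⟨i, rfl⟩)
      obtain ⟨c, hc⟩ := (Submodule.mem_span_range_iff_exists_fun ℝ).1 hmem
      let u : Fin n → ℝ := ∑ k, c k • (Pi.single (a k) (1:ℝ) : Fin n → ℝ)
      have hu : dg s u = 0 := by
        simp only [u, map_sum, map_smul]
        apply Finset.sum_eq_zero
        intro k _
        have : dg s (Pi.single (a k) (1:ℝ)) = 0 := by
          ext j
          by_cases hj : j = a k
          · subst hj; simp [hs]
          · simp [hj]
        rw [this, smul_zero]
      refine ⟨v - u, ?_, ?_⟩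
      · have : K.mkQ (v - u) = 0 := by
          rw [map_sub, ← hc]
          simp only [u, map_sum, map_smul]
          exact sub_self _
        rwa [Submodule.mkQ_apply, Submodule.Quotient.mk_eq_zero] at this
      · show dg s (v - u) = dg s v
        rw [map_sub, hu, sub_zero]
    exact (Submodule.finrank_mono hle).trans (Submodule.finrank_map_le _ _)
end E
end HD


namespace HD
section G
open scoped Topology
open Set Filter
variable {E F G : Type} [NormedAddCommGroup E] [NormedSpace ℝ E]
  [NormedAddCommGroup F] [NormedSpace ℝ F] [NormedAddCommGroup G] [NormedSpace ℝ G]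

lemma ann [FiniteDimensional ℝ E] (ω : E →L[ℝ] E →L[ℝ] ℝ) (ha : ∀ u v, ω u v = - ω v u)
    (b : E →L[ℝ] ℝ) (hb : ∀ v, ω v = 0 → b v = 0) : ∃ X, ω X = b := by
  let ωl : E →ₗ[ℝ] Module.Dual ℝ E :=
    { toFun := fun v => (ω v).toLinearMap
      map_add' := by intro u v; ext z; simp
      map_smul' := by intro u v; ext z; simp }
  have hωl : ∀ u v, ωl u v = ω u v := fun _ _ => rfl
  have h1 : b.toLinearMap ∈ (LinearMap.ker ωl).dualAnnihilator := by
    rw [Submodule.mem_dualAnnihilator]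
    intro v hv
    apply hb
    ext u
    rw [← hωl, LinearMap.mem_ker.1 hv]; rfl
  rw [← LinearMap.range_dualMap_eq_dualAnnihilator_ker] at h1
  obtain ⟨φ, hφ⟩ := h1
  obtain ⟨y, rfl⟩ := (Module.evalEquiv ℝ E).surjective φ
  refine ⟨-y, ?_⟩
  ext v
  have h2 := congrArg (fun L : E →ₗ[ℝ] ℝ => L v) hφ
  have h3 : ω v y = b v := h2
  rw [← h3, ha v y]; simp

lemma finrank_comap [FiniteDimensional ℝ E] [FiniteDimensional ℝ F] (L : E →ₗ[ℝ] F) (K : Submodule ℝ E) 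
    (X : E) (hX : L X ≠ 0) (hK : ∀ v, v ∈ K ↔ ∃ s : ℝ, L v = s • L X) :
    Module.finrank ℝ K = Module.finrank ℝ (LinearMap.ker L) + 1 := by
  have hX0 : X ≠ 0 := by rintro rfl; simp at hX
  have h1 : K = LinearMap.ker L ⊔ Submodule.span ℝ {X} := by
    ext v
    rw [hK, Submodule.mem_sup]
    constructor
    · rintro ⟨s, hs⟩
      refine ⟨v - s • X, ?_, s • X, Submodule.smul_mem _ _ (Submodule.mem_span_singleton_self X), by abel⟩
      simp [hs]
    · rintro ⟨y, hy, z, hz, rfl⟩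
      obtain ⟨s, rfl⟩ := Submodule.mem_span_singleton.1 hz
      exact ⟨s, by simp [LinearMap.mem_ker.1 hy]⟩
  have h2 : LinearMap.ker L ⊓ Submodule.span ℝ {X} = ⊥ := by
    rw [eq_bot_iff]
    rintro v ⟨hv, hz⟩
    obtain ⟨s, rfl⟩ := Submodule.mem_span_singleton.1 hz
    have : s • L X = 0 := by simpa using hv
    rcases smul_eq_zero.1 this with h | h
    · simp [h]
    · exact absurd h hX
  have h3 := Submodule.finrank_sup_add_finrank_inf_eq (LinearMap.ker L) (Submodule.span ℝ {X})
  rw [h2, ← h1, finrank_bot, finrank_span_singleton hX0] at h3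
  omega

lemma rank_drop [FiniteDimensional ℝ E] (ω ω' : E →L[ℝ] E →L[ℝ] ℝ) (ha : ∀ u v, ω u v = - ω v u)
    (p β : E →L[ℝ] ℝ) (X : E) (hX : ω X = β) (hp : ∀ v, ω v = 0 → p v = 0) (hpX : p X = 1)
    (c : ℝ) (hc : c ≠ 0) (hω' : ∀ u v, ω' u v = c * (ω u v - (p u * β v - p v * β u))) (r : ℕ)
    (hr : Module.finrank ℝ (LinearMap.range ω.toLinearMap) = 2 * (r + 1)) :
    Module.finrank ℝ (LinearMap.range ω'.toLinearMap) = 2 * r := by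
  obtain ⟨Y, hY⟩ := ann ω ha p hp
  have hXX : β X = 0 := by
    have := ha X X
    rw [hX] at this; linarith
  have hYY : p Y = 0 := by
    have := ha Y Y
    rw [hY] at this; linarith
  have hβY : β Y = -1 := by
    have := ha X Y
    rw [hX, hY, hpX] at this; linarith
  have hβ : ∀ v, ω v = 0 → β v = 0 := by
    intro v hv
    rw [← hX, ha, hv]; simp
  let f : (LinearMap.ker ω.toLinearMap × ℝ × ℝ) →ₗ[ℝ] E :=
    (LinearMap.ker ω.toLinearMap).subtype.coprod
      ((LinearMap.toSpanSingleton ℝ E X).coprod (LinearMap.toSpanSingleton ℝ E Y))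
  have hf : ∀ k a b, f (k, a, b) = k + (a • X + b • Y) := fun _ _ _ => rfl
  have hk1 : ∀ k : LinearMap.ker ω.toLinearMap, ω (k:E) = 0 := fun k => k.2
  have hinj : Function.Injective f := by
    rw [← LinearMap.ker_eq_bot, LinearMap.ker_eq_bot']
    rintro ⟨k, a, b⟩ h
    rw [hf] at h
    have h1 := congrArg p h
    have h2 := congrArg β h
    simp [hp _ (hk1 k), hβ _ (hk1 k), hpX, hYY, hXX, hβY] at h1 h2
    subst h1; subst h2
    simp at h
    simp [h]
  have hrange : LinearMap.range f = LinearMap.ker ω'.toLinearMap := by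
    ext v
    have hmem : v ∈ LinearMap.ker ω'.toLinearMap ↔ ω v = p v • β - β v • p := by
      rw [LinearMap.mem_ker]
      constructor
      · intro h
        ext u
        have : ω' v u = 0 := by
          have := congrArg (fun L : E →L[ℝ] ℝ => L u) h
          simpa using this
        rw [hω'] at this
        have := (mul_eq_zero.1 this).resolve_left hc
        simp; linarith
      · intro h
        ext u
        show ω' v u = 0
        rw [hω', h]; simp; right; ring
    rw [hmem]
    constructor
    · rintro ⟨⟨k, a, b⟩, rfl⟩
      rw [hf]
      simp [hk1 k, hX, hY, hp _ (hk1 k), hβ _ (hk1 k), hpX, hYY, hXX, hβY]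
      module
    · intro h
      refine ⟨(⟨v - p v • X + β v • Y, ?_⟩, p v, - β v), ?_⟩
      · show ω (v - p v • X + β v • Y) = 0
        rw [map_add, map_sub, map_smul, map_smul, hX, hY, h]; abel
      · rw [hf]; simp only; module
  have h1 := LinearMap.finrank_range_of_inj hinj
  rw [hrange] at h1
  have h2 : Module.finrank ℝ (LinearMap.ker ω.toLinearMap × ℝ × ℝ) =
    Module.finrank ℝ (LinearMap.ker ω.toLinearMap) + 2 := by simp
  have h3 := LinearMap.finrank_range_add_finrank_ker ω.toLinearMap
  have h4 := LinearMap.finrank_range_add_finrank_ker ω'.toLinearMap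
  omega

lemma indep_of_rank [FiniteDimensional ℝ E] {r : ℕ} (ω : E →L[ℝ] E →L[ℝ] ℝ)
    (p q : Fin r → E →L[ℝ] ℝ) (h : ∀ u v, ω u v = ∑ i, (p i u * q i v - p i v * q i u))
    (hr : Module.finrank ℝ (LinearMap.range ω.toLinearMap) = 2 * r) :
    LinearIndependent ℝ (Sum.elim q p : Fin r ⊕ Fin r → E →L[ℝ] ℝ) := by
  rw [linearIndependent_iff_card_le_finrank_span]
  have : LinearMap.range ω.toLinearMap ≤ Submodule.span ℝ (range (Sum.elim q p)) := by
    rintro _ ⟨u, rfl⟩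
    have : ω u = ∑ i, (p i u • q i - q i u • p i) := by
      ext v
      rw [h]
      simp [mul_comm]
    show ω u ∈ _
    rw [this]
    refine Submodule.sum_mem _ fun i _ => Submodule.sub_mem _ ?_ ?_
    · exact Submodule.smul_mem _ _ (Submodule.subset_span ⟨Sum.inl i, rfl⟩)
    · exact Submodule.smul_mem _ _ (Submodule.subset_span ⟨Sum.inr i, rfl⟩)
  have h2 := Submodule.finrank_mono this
  rw [hr] at h2
  simp only [Fintype.card_sum, Fintype.card_fin]
  rw [Set.finrank]
  omega
end G
end HD


namespace HD
section F
open scoped Topology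
open Set Filter
variable {E F G : Type} [NormedAddCommGroup E] [NormedSpace ℝ E]
  [NormedAddCommGroup F] [NormedSpace ℝ F] [NormedAddCommGroup G] [NormedSpace ℝ G]

/-- differentiate `ω (Ξ v) u = g v * β u` along `z` -/
lemma diff_id {ω : E → E →L[ℝ] E →L[ℝ] ℝ} {β g : E → E →L[ℝ] ℝ} {Ξ : E → E →L[ℝ] E} {x : E}
    (hω : DifferentiableAt ℝ ω x) (hβ : DifferentiableAt ℝ β x) (hΞ : DifferentiableAt ℝ Ξ x)
    (hg : DifferentiableAt ℝ g x)
    (h : ∀ᶠ y in 𝓝 x, ∀ v u, ω y (Ξ y v) u = g y v * β y u) (v u z : E) :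
    fderiv ℝ ω x z (Ξ x v) u + ω x (fderiv ℝ Ξ x z v) u =
      fderiv ℝ g x z v * β x u + g x v * fderiv ℝ β x z u := by
  have d1 := (hω.hasFDerivAt.clm_apply
    (hΞ.hasFDerivAt.clm_apply (hasFDerivAt_const v x))).clm_apply (hasFDerivAt_const u x)
  have d2 := (hg.hasFDerivAt.clm_apply (hasFDerivAt_const v x)).mul
    (hβ.hasFDerivAt.clm_apply (hasFDerivAt_const u x))
  have d3 := d2.congr_of_eventuallyEq (h.mono fun y hy => hy v u)
  have d4 := congrArg (fun L : E →L[ℝ] ℝ => L z) (d1.unique d3)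
  simp at d4
  linarith

lemma alt_fderiv {ω : E → E →L[ℝ] E →L[ℝ] ℝ} {x : E} (hω : DifferentiableAt ℝ ω x)
    (ha : ∀ᶠ y in 𝓝 x, ∀ u v, ω y u v = - ω y v u) (z u v : E) :
    fderiv ℝ ω x z u v = - fderiv ℝ ω x z v u := by
  have d : ∀ u v, HasFDerivAt (fun y => ω y u v) _ x := fun u v =>
    (hω.hasFDerivAt.clm_apply (hasFDerivAt_const u x)).clm_apply (hasFDerivAt_const v x)
  have d3 : HasFDerivAt (fun y => ω y u v) _ x := (d v u).neg.congr_of_eventuallyEq (ha.mono fun y hy => hy u v)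
  have d4 := congrArg (fun L : E →L[ℝ] ℝ => L z) ((d u v).unique d3)
  simpa using d4

theorem frob [FiniteDimensional ℝ E] (ω : E → E →L[ℝ] E →L[ℝ] ℝ) (β g : E → E →L[ℝ] ℝ)
    (Ξ : E → E →L[ℝ] E) (x₀ : E) (Q : E →L[ℝ] E) (hQ : ∀ v, Q (Q v) = Q v)
    (hω : Sm ω x₀) (hβ : Sm β x₀) (hg : Sm g x₀) (hΞ : Sm Ξ x₀) (c : ℝ)
    (ha : ∀ᶠ x in 𝓝 x₀, ∀ u v, ω x u v = - ω x v u)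
    (hc : ∀ᶠ x in 𝓝 x₀, ∀ u v z,
      fderiv ℝ ω x u v z + fderiv ℝ ω x v z u + fderiv ℝ ω x z u v = 0)
    (hdβ : ∀ᶠ x in 𝓝 x₀, ∀ u v, fderiv ℝ β x u v - fderiv ℝ β x v u = c * ω x u v)
    (h1 : ∀ᶠ x in 𝓝 x₀, ∀ v, Q (Ξ x v) = Q v)
    (h2 : ∀ᶠ x in 𝓝 x₀, ∀ v, Ξ x (Q v) = Ξ x v)
    (h2' : ∀ᶠ x in 𝓝 x₀, ∀ v, g x (Q v) = g x v)
    (h3 : ∀ᶠ x in 𝓝 x₀, ∀ v u, ω x (Ξ x v) u = g x v * β x u)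
    (h4 : ∀ᶠ x in 𝓝 x₀, ∀ v, β x (Ξ x v) = 0)
    (h5 : ∀ᶠ x in 𝓝 x₀, ∀ v s, (∀ u, ω x v u = s * β x u) → Q v = 0 → v = 0)
    (h6 : (∀ᶠ x in 𝓝 x₀, β x ≠ 0) ∨ g = 0) (f₀ : E → ℝ) (hf₀ : ContDiff ℝ (⊤ : ℕ∞) f₀) :
    ∃ f : E → ℝ, Sm f x₀ ∧ (∀ᶠ x in 𝓝 x₀, ∀ v, fderiv ℝ f x (Ξ x v) = g x v) ∧
      (∀ᶠ x in 𝓝 x₀, Q (x - x₀) = 0 → f x = f₀ x) ∧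
      ∀ (W : E →L[ℝ] E) (w l μ : ℝ), (∀ v, W (Q v) = Q (W v)) → W x₀ = 0 →
        (∀ᶠ x in 𝓝 x₀, ∀ u v, fderiv ℝ ω x (W x) u v + ω x (W u) v + ω x u (W v) = w * ω x u v) →
        (∀ᶠ x in 𝓝 x₀, ∀ u, fderiv ℝ β x (W x) u + β x (W u) = l * β x u) →
        (μ = w - l ∨ g = 0) → (∀ x, fderiv ℝ f₀ x (W x) = μ * f₀ x) →
        ∀ᶠ x in 𝓝 x₀, fderiv ℝ f x (W x) = μ * f x := by
  have h6' : ∀ᶠ x in 𝓝 x₀, β x ≠ 0 ∨ g = 0 := by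
    rcases h6 with h | h
    · exact h.mono fun x hx => Or.inl hx
    · exact Eventually.of_forall fun x => Or.inr h
  have hQd : ∀ᶠ x in 𝓝 x₀, ∀ z v, Q (fderiv ℝ Ξ x z v) = 0 := by
    filter_upwards [hΞ.diff, h1.eventually_nhds] with x i1 i2 z v
    have := ev_fderiv_app (A := fun _ => Q) (hasFDerivAt_const Q x)
      (i1.hasFDerivAt.clm_apply (hasFDerivAt_const v x)) (hasFDerivAt_const (Q v) x)
      (i2.mono fun y hy => hy v) z
    simpa using this
  have hβd : ∀ᶠ x in 𝓝 x₀, ∀ z v, fderiv ℝ β x z (Ξ x v) = - β x (fderiv ℝ Ξ x z v) := by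
    filter_upwards [hβ.diff, hΞ.diff, h4.eventually_nhds] with x i0 i1 i2 z v
    have := ev_fderiv_app i0.hasFDerivAt
      (i1.hasFDerivAt.clm_apply (hasFDerivAt_const v x)) (hasFDerivAt_const (0:ℝ) x)
      (i2.mono fun y hy => hy v) z
    simp at this
    linarith
  have hdi : ∀ᶠ x in 𝓝 x₀, ∀ v u z : E,
    fderiv ℝ ω x z (Ξ x v) u + ω x (fderiv ℝ Ξ x z v) u =
      fderiv ℝ g x z v * β x u + g x v * fderiv ℝ β x z u := by
    filter_upwards [hω.diff, hβ.diff, hΞ.diff, hg.diff, h3.eventually_nhds] with x i1 i2 i3 i4 i5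
    exact diff_id i1 i2 i3 i4 i5
  have haf : ∀ᶠ x in 𝓝 x₀, ∀ z u v, fderiv ℝ ω x z u v = - fderiv ℝ ω x z v u := by
    filter_upwards [hω.diff, ha.eventually_nhds] with x i1 i2
    exact alt_fderiv i1 i2
  have key : ∀ᶠ x in 𝓝 x₀, ∀ v₁ v₂ u, ω x (fderiv ℝ Ξ x (Ξ x v₁) v₂ - fderiv ℝ Ξ x (Ξ x v₂) v₁) u =
      (fderiv ℝ g x (Ξ x v₁) v₂ - fderiv ℝ g x (Ξ x v₂) v₁) * β x u := by
    filter_upwards [hβd, hdi, haf, ha, hc, hdβ, h3, h4] with x j1 j2 j3 j4 j5 j6 j7 j8 v₁ v₂ u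
    have e1 := j2 v₂ u (Ξ x v₁)
    have e2 := j2 v₁ u (Ξ x v₂)
    have e3 := j5 (Ξ x v₁) (Ξ x v₂) u
    have e4 := j2 v₁ (Ξ x v₂) u
    have e5 := j4 (fderiv ℝ Ξ x u v₁) (Ξ x v₂)
    have e6 := j3 (Ξ x v₂) u (Ξ x v₁)
    have e7 := j1 u v₁
    have e8 := j6 (Ξ x v₁) u
    have e9 := j6 (Ξ x v₂) u
    rw [j7] at e5 e8 e9
    rw [j8, mul_zero, zero_add, e5] at e4
    simp only [map_sub, ContinuousLinearMap.sub_apply]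
    linear_combination e1 - e2 - e3 + e4 + e6 + g x v₂ * e7 + g x v₂ * e8 - g x v₁ * e9
  have hY : ∀ᶠ x in 𝓝 x₀, ∀ v₁ v₂, fderiv ℝ Ξ x (Ξ x v₁) v₂ = fderiv ℝ Ξ x (Ξ x v₂) v₁ := by
    filter_upwards [key, h5, hQd] with x i1 i2 i3 v₁ v₂
    refine sub_eq_zero.1 (i2 _ _ (i1 v₁ v₂) ?_)
    rw [map_sub, i3, i3, sub_zero]
  have hgY : ∀ᶠ x in 𝓝 x₀, ∀ v₁ v₂, fderiv ℝ g x (Ξ x v₁) v₂ = fderiv ℝ g x (Ξ x v₂) v₁ := by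
    filter_upwards [key, hY, h6'] with x i1 i2 i3 v₁ v₂
    rcases i3 with i3 | i3
    · obtain ⟨u, hu⟩ : ∃ u, β x u ≠ 0 := by
        by_contra! h
        exact i3 (by ext u; simp [h u])
      have := i1 v₁ v₂ u
      rw [i2 v₁ v₂, sub_self, map_zero, ContinuousLinearMap.zero_apply] at this
      exact sub_eq_zero.1 ((mul_eq_zero.1 this.symm).resolve_right hu)
    · have : fderiv ℝ g x = 0 := by
        rw [i3]; exact (hasFDerivAt_const (0 : E →L[ℝ] ℝ) x).fderiv
      simp [this]
  obtain ⟨f, hf, hf1, hf2⟩ := solver Q hQ Ξ g x₀ hΞ hg h1 h2 h2' hY hgY f₀ hf₀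
  refine ⟨f, hf, hf1, hf2, ?_⟩
  intro W w l μ hWQ hW0 hWω hWβ hμ hhom
  refine homog Q hQ Ξ g x₀ hΞ hg h1 f f₀ hf hf₀ hf1 hf2 W hWQ hW0 μ hhom ?_
  filter_upwards [hWω, hWβ, hdi, h3, h5, h1, h6', h2'] with x i1 i2 i3 i4 i5 i6 i7 i8 v
  set Z := W (Ξ x v) - fderiv ℝ Ξ x (W x) v with hZ
  have hZω : ∀ u, ω x Z u = ((w - l) * g x v - fderiv ℝ g x (W x) v) * β x u := by
    intro u
    have e1 := i1 (Ξ x v) u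
    have e2 := i2 u
    have e3 := i3 v u (W x)
    rw [i4, i4] at e1
    rw [hZ, map_sub, ContinuousLinearMap.sub_apply]
    linear_combination e1 - e3 - g x v * e2
  have hz : Z = Ξ x Z := by
    refine sub_eq_zero.1 (i5 _ ((w - l) * g x v - fderiv ℝ g x (W x) v - g x Z) ?_ ?_)
    · intro u
      rw [map_sub, ContinuousLinearMap.sub_apply, hZω, i4]; ring
    · rw [map_sub, i6, sub_self]
  refine ⟨Z, hz, ?_⟩
  rcases i7 with i7 | i7
  · rcases hμ with hμ | hμ
    · obtain ⟨u, hu⟩ : ∃ u, β x u ≠ 0 := by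
        by_contra! h
        exact i7 (by ext u; simp [h u])
      have := hZω u
      rw [hz, i4] at this
      rw [hμ]
      exact mul_right_cancel₀ hu this
    · have : fderiv ℝ g x = 0 := by
        rw [hμ]; exact (hasFDerivAt_const (0 : E →L[ℝ] ℝ) x).fderiv
      simp [this, hμ]
  · have : fderiv ℝ g x = 0 := by
        rw [i7]; exact (hasFDerivAt_const (0 : E →L[ℝ] ℝ) x).fderiv
    simp [this, i7]
end F
end HD


namespace HD
section H
open scoped Topology
open Set Filter
variable {n : ℕ}

lemma dg_idem (s : Fin n → ℝ) (hs : ∀ i, s i = 0 ∨ s i = 1) (v : Fin n → ℝ) :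
    dg s (dg s v) = dg s v := by
  ext i
  rcases hs i with h | h <;> simp [h]

lemma dg_comm (s t : Fin n → ℝ) (v : Fin n → ℝ) : dg s (dg t v) = dg t (dg s v) := by
  ext i
  simp; ring

lemma sm_flip {E : Type} [NormedAddCommGroup E] [NormedSpace ℝ E] [FiniteDimensional ℝ E] {ω : E → E →L[ℝ] E →L[ℝ] ℝ} {x₀ : E}
    (h : Sm ω x₀) (u : E) : Sm (fun x => (ω x).flip u) x₀ := by
  obtain ⟨S, hS, hSo, hxS⟩ := eventually_nhds_iff.1 h
  have h2 : ContDiffOn ℝ (⊤ : ℕ∞) (fun x => (ω x).flip u) S :=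
    contDiffOn_clm_apply.2 fun v x hx =>
      (((hS x hx).clm_apply contDiffAt_const).clm_apply contDiffAt_const).contDiffWithinAt
  filter_upwards [hSo.mem_nhds hxS] with x hx
  exact h2.contDiffAt (hSo.mem_nhds hx)

lemma sm_smulRight {E : Type} [NormedAddCommGroup E] [NormedSpace ℝ E] {a b : E → E →L[ℝ] ℝ} {x₀ : E}
    (ha : Sm a x₀) (hb : Sm b x₀) : Sm (fun x => (a x).smulRight (b x)) x₀ := by
  filter_upwards [ha, hb] with x h1 h2
  exact h1.smulRight h2

/-- closed, alternating, constant rank germs -/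
structure PS (ω : (Fin n → ℝ) → (Fin n → ℝ) →L[ℝ] (Fin n → ℝ) →L[ℝ] ℝ) (x₀ : Fin n → ℝ) (k : ℕ) :
    Prop where
  sm : Sm ω x₀
  alt : ∀ᶠ x in 𝓝 x₀, ∀ u v, ω x u v = - ω x v u
  closed : ∀ᶠ x in 𝓝 x₀, ∀ u v z,
      fderiv ℝ ω x u v z + fderiv ℝ ω x v z u + fderiv ℝ ω x z u v = 0
  rank : ∀ᶠ x in 𝓝 x₀, Module.finrank ℝ (LinearMap.range (ω x).toLinearMap) = k

/-- homogeneity of the form -/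
def Hom (ω : (Fin n → ℝ) → (Fin n → ℝ) →L[ℝ] (Fin n → ℝ) →L[ℝ] ℝ) (x₀ : Fin n → ℝ)
    (w : Fin n → ℝ) (wt : ℝ) : Prop :=
  ∀ᶠ x in 𝓝 x₀, ∀ u v, fderiv ℝ ω x (dg w x) u v + ω x (dg w u) v + ω x u (dg w v) = wt * ω x u v

lemma PS.ker_const {ω : (Fin n → ℝ) → (Fin n → ℝ) →L[ℝ] (Fin n → ℝ) →L[ℝ] ℝ} {x₀ : Fin n → ℝ} {k : ℕ}
    (h : PS ω x₀ k) : ∀ᶠ x in 𝓝 x₀, Module.finrank ℝ (LinearMap.ker (ω x).toLinearMap) =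
      Module.finrank ℝ (LinearMap.ker (ω x₀).toLinearMap) := by
  have h0 := h.rank.self_of_nhds
  filter_upwards [h.rank] with x hx
  have h3 := LinearMap.finrank_range_add_finrank_ker (ω x).toLinearMap
  have h4 := LinearMap.finrank_range_add_finrank_ker (ω x₀).toLinearMap
  omega

theorem solveK (ω : (Fin n → ℝ) → (Fin n → ℝ) →L[ℝ] (Fin n → ℝ) →L[ℝ] ℝ) (x₀ : Fin n → ℝ) (k : ℕ)
    (h : PS ω x₀ k) : ∃ s : Fin n → ℝ, (∀ i, s i = 0 ∨ s i = 1) ∧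
    Module.finrank ℝ (LinearMap.range (dg s).toLinearMap) ≤
      Module.finrank ℝ (LinearMap.ker (ω x₀).toLinearMap) ∧
    ∀ f₀ : (Fin n → ℝ) → ℝ, ContDiff ℝ (⊤ : ℕ∞) f₀ → ∃ f : (Fin n → ℝ) → ℝ, Sm f x₀ ∧
      (∀ᶠ x in 𝓝 x₀, ∀ v, ω x v = 0 → fderiv ℝ f x v = 0) ∧
      (∀ᶠ x in 𝓝 x₀, dg s (x - x₀) = 0 → f x = f₀ x) ∧
      ∀ (w : Fin n → ℝ) (wt μ : ℝ), dg w x₀ = 0 → Hom ω x₀ w wt →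
        (∀ x, fderiv ℝ f₀ x (dg w x) = μ * f₀ x) → 
        ∀ᶠ x in 𝓝 x₀, fderiv ℝ f x (dg w x) = μ * f x := by
  obtain ⟨s, hs, h0, hle⟩ := coordQ (LinearMap.ker (ω x₀).toLinearMap)
  refine ⟨s, hs, hle, fun f₀ hf₀ => ?_⟩
  obtain ⟨Ξ, hΞ, hΞ'⟩ := kernel_field ω x₀ h.sm (dg s) (dg_idem s hs) (fun v hv => h0 v hv)
    (h.ker_const.mono fun x hx => by rw [hx]; exact hle)
  obtain ⟨f, hf, hf1, hf2, hf3⟩ := frob ω 0 0 Ξ x₀ (dg s) (dg_idem s hs) h.sm (Sm.const 0 _) (Sm.const 0 _)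
    hΞ 0 h.alt h.closed (Eventually.of_forall fun x u v => by
      have : fderiv ℝ (0 : (Fin n → ℝ) → (Fin n → ℝ) →L[ℝ] ℝ) x = 0 :=
        (hasFDerivAt_const (0 : (Fin n → ℝ) →L[ℝ] ℝ) x).fderiv
      simp [this]) (hΞ'.mono fun x hx => hx.1) (hΞ'.mono fun x hx => hx.2.1)
      (by simp) (hΞ'.mono fun x hx v u => by rw [hx.2.2.1]; simp) (by simp)
      (hΞ'.mono fun x hx v s hv hq => hx.2.2.2 v (by ext u; simp [hv u]) hq) (Or.inr rfl) f₀ hf₀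
  refine ⟨f, hf, ?_, hf2, ?_⟩
  · filter_upwards [hf1, hΞ'] with x h1 h2 v hv
    have : v = Ξ x v := by
      refine sub_eq_zero.1 (h2.2.2.2 _ ?_ ?_)
      · rw [map_sub, hv, h2.2.2.1, sub_zero]
      · rw [map_sub, h2.1, sub_self]
    rw [this, h1]; rfl
  · intro w wt μ hw hω hh
    refine hf3 (dg w) wt 0 μ (dg_comm _ _) hw hω (Eventually.of_forall fun x u => ?_) (Or.inr rfl) hh
    have : fderiv ℝ (0 : (Fin n → ℝ) → (Fin n → ℝ) →L[ℝ] ℝ) x = 0 :=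
        (hasFDerivAt_const (0 : (Fin n → ℝ) →L[ℝ] ℝ) x).fderiv
    simp [this]

theorem solveB (ω : (Fin n → ℝ) → (Fin n → ℝ) →L[ℝ] (Fin n → ℝ) →L[ℝ] ℝ) (x₀ : Fin n → ℝ) (k : ℕ)
    (h : PS ω x₀ k) (β : (Fin n → ℝ) → (Fin n → ℝ) →L[ℝ] ℝ) (hβ : Sm β x₀) (c : ℝ)
    (hdβ : ∀ᶠ x in 𝓝 x₀, ∀ u v, fderiv ℝ β x u v - fderiv ℝ β x v u = c * ω x u v)
    (hK : ∀ᶠ x in 𝓝 x₀, ∀ v, ω x v = 0 → β x v = 0) (hβ0 : β x₀ ≠ 0) :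
    ∃ f : (Fin n → ℝ) → ℝ, Sm f x₀ ∧
      (∀ᶠ x in 𝓝 x₀, ∀ v s, ω x v = s • β x → fderiv ℝ f x v = s) ∧
      ∀ (w : Fin n → ℝ) (wt l : ℝ), dg w x₀ = 0 → Hom ω x₀ w wt →
        (∀ᶠ x in 𝓝 x₀, ∀ u, fderiv ℝ β x (dg w x) u + β x (dg w u) = l * β x u) →
        ∀ᶠ x in 𝓝 x₀, fderiv ℝ f x (dg w x) = (wt - l) * f x := by
  obtain ⟨u₀, hu₀⟩ : ∃ u, β x₀ u ≠ 0 := by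
    by_contra! h
    exact hβ0 (by ext u; simp [h u])
  have hβu : Sm (fun x => β x u₀) x₀ := hβ.clm_apply (Sm.const _ _)
  have hev : ∀ᶠ x in 𝓝 x₀, β x u₀ ≠ 0 := hβu.continuousAt.eventually_ne hu₀
  -- `B x v = β x u₀ • ω x v - ω x v u₀ • β x`
  let B : (Fin n → ℝ) → (Fin n → ℝ) →L[ℝ] ((Fin n → ℝ) →L[ℝ] ℝ) := fun x => β x u₀ • ω x - ((ω x).flip u₀).smulRight (β x)
  have hBa : ∀ x v, B x v = β x u₀ • ω x v - ω x v u₀ • β x := fun x v => rfl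
  have hB : Sm B x₀ := by
    refine (hβu.smul h.sm).sub ?_
    have h1 : Sm (fun x => (ω x).flip u₀) x₀ := 
      sm_flip h.sm u₀
    exact sm_smulRight h1 hβ
  have hBk : ∀ x, β x u₀ ≠ 0 → ∀ v, B x v = 0 ↔ ∃ s : ℝ, ω x v = s • β x := by
    intro x hx v
    rw [hBa, sub_eq_zero]
    constructor
    · intro h
      refine ⟨(β x u₀)⁻¹ * ω x v u₀, ?_⟩
      rw [mul_smul, ← h, smul_smul, inv_mul_cancel₀ hx, one_smul]
    · rintro ⟨s, hs⟩
      rw [hs, smul_smul]; simp [mul_comm]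
  have hdim : ∀ᶠ x in 𝓝 x₀, Module.finrank ℝ (LinearMap.ker (B x).toLinearMap) =
      Module.finrank ℝ (LinearMap.ker (ω x).toLinearMap) + 1 := by
    filter_upwards [hev, hK, h.alt] with x i1 i2 i3
    obtain ⟨X, hX⟩ := ann (ω x) i3 (β x) i2
    refine finrank_comap (ω x).toLinearMap _ X ?_ ?_
    · intro h0
      have : ω x X = 0 := h0
      rw [hX] at this
      apply i1
      rw [this]; rfl
    · intro v
      have hX' : (ω x).toLinearMap X = β x := hX
      rw [hX']
      exact hBk x i1 v
  obtain ⟨s, hs, h0, hle⟩ := coordQ (LinearMap.ker (B x₀).toLinearMap)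
  obtain ⟨Ξ, hΞ, hΞ'⟩ := kernel_field B x₀ hB (dg s) (dg_idem s hs) (fun v hv => h0 v hv)
    (by
      have e0 := hdim.self_of_nhds
      filter_upwards [hdim, h.ker_const] with x e1 e2
      omega)
  let g : (Fin n → ℝ) → (Fin n → ℝ) →L[ℝ] ℝ := fun x => (β x u₀)⁻¹ • ((ω x).flip u₀ ∘L Ξ x)
  have hga : ∀ x v, g x v = (β x u₀)⁻¹ * ω x (Ξ x v) u₀ := fun x v => rfl
  have hg : Sm g x₀ := by
    refine (hβu.inv hu₀).smul ?_
    have h1 : Sm (fun x => (ω x).flip u₀) x₀ := 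
      sm_flip h.sm u₀
    exact Sm.clm_apply (Sm.clm (ContinuousLinearMap.compL ℝ (Fin n → ℝ) (Fin n → ℝ) ℝ) h1) hΞ
  have h3 : ∀ᶠ x in 𝓝 x₀, ∀ v u, ω x (Ξ x v) u = g x v * β x u := by
    filter_upwards [hΞ', hev] with x i1 i2 v u
    obtain ⟨t, ht⟩ := (hBk x i2 _).1 (i1.2.2.1 v)
    rw [hga, ht]
    simp only [ContinuousLinearMap.smul_apply, smul_eq_mul]
    field_simp
  have h5 : ∀ᶠ x in 𝓝 x₀, ∀ v t, (∀ u, ω x v u = t * β x u) → dg s v = 0 → v = 0 := by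
    filter_upwards [hΞ', hev] with x i1 i2 v t i3 i4
    refine i1.2.2.2 v ((hBk x i2 v).2 ⟨t, ?_⟩) i4
    ext u; simp [i3 u]
  obtain ⟨f, hf, hf1, hf2, hf3⟩ := frob ω β g Ξ x₀ (dg s) (dg_idem s hs) h.sm hβ hg
    hΞ c h.alt h.closed hdβ (hΞ'.mono fun x hx => hx.1) (hΞ'.mono fun x hx => hx.2.1)
      (hΞ'.mono fun x hx v => by rw [hga, hga, hx.2.1]) h3 (by
        filter_upwards [h3, h.alt, hK] with x i1 i2 i3 v
        by_cases h0 : g x v = 0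
        · apply i3
          ext u; rw [i1, h0]; simp
        · have e1 := i2 (Ξ x v) (Ξ x v)
          rw [i1] at e1
          have : g x v * β x (Ξ x v) = 0 := by linarith
          exact (mul_eq_zero.1 this).resolve_left h0) h5
      (Or.inl (hev.mono fun x hx h => hx (by rw [h]; rfl))) (fun _ => 0) contDiff_const
  refine ⟨f, hf, ?_, ?_⟩
  · filter_upwards [hf1, hΞ', h3, h5, hev] with x h1 h2 i3 i5 i6 v t hv
    have h7 : v = Ξ x v := by
      refine sub_eq_zero.1 (i5 _ (t - g x v) ?_ ?_)
      · intro u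
        rw [map_sub, ContinuousLinearMap.sub_apply, hv, i3]; simp; ring
      · rw [map_sub, h2.1, sub_self]
    have h8 := i3 v u₀
    rw [← h7, hv] at h8
    have h9 := mul_right_cancel₀ i6 (h8 : t * β x u₀ = _)
    have h10 := h1 v
    rw [← h7, ← h9] at h10
    exact h10
  · intro w wt l hw hω hh
    refine hf3 (dg w) wt l _ (dg_comm _ _) hw hω hh (Or.inl rfl) (fun x => ?_)
    simp
end H
end HD


namespace HD
section I
open scoped Topology
open Set Filter
variable {n : ℕ}

lemma fd_app {E : Type} [NormedAddCommGroup E] [NormedSpace ℝ E] {A : E → E →L[ℝ] ℝ} {x : E}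
    (h : DifferentiableAt ℝ A x) (z u : E) :
    fderiv ℝ (fun y => A y u) x z = fderiv ℝ A x z u := by
  have := (h.hasFDerivAt.clm_apply (hasFDerivAt_const u x)).fderiv
  rw [this]; simp

lemma fd_app2 {E : Type} [NormedAddCommGroup E] [NormedSpace ℝ E] {A : E → E →L[ℝ] E →L[ℝ] ℝ} {x : E}
    (h : DifferentiableAt ℝ A x) (z u v : E) :
    fderiv ℝ (fun y => A y u v) x z = fderiv ℝ A x z u v := by
  have := ((h.hasFDerivAt.clm_apply (hasFDerivAt_const u x)).clm_apply (hasFDerivAt_const v x)).fderiv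
  rw [this]; simp

lemma fd_coord (i : Fin n) (x v : Fin n → ℝ) : fderiv ℝ (fun x : Fin n → ℝ => x i) x v = v i :=
  congrArg (fun L : (Fin n → ℝ) →L[ℝ] ℝ => L v)
    (ContinuousLinearMap.proj (R := ℝ) (φ := fun _ : Fin n => ℝ) i).hasFDerivAt.fderiv

/-- the reduced form -/
noncomputable def red (ω : (Fin n → ℝ) → (Fin n → ℝ) →L[ℝ] (Fin n → ℝ) →L[ℝ] ℝ) (p : (Fin n → ℝ) → ℝ)
    (β : (Fin n → ℝ) → (Fin n → ℝ) →L[ℝ] ℝ) (c : ℝ) :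
    (Fin n → ℝ) → (Fin n → ℝ) →L[ℝ] (Fin n → ℝ) →L[ℝ] ℝ := fun x =>
  Real.exp (-c * p x) • (ω x - ((fderiv ℝ p x).smulRight (β x) - (β x).smulRight (fderiv ℝ p x)))

lemma red_apply (ω : (Fin n → ℝ) → (Fin n → ℝ) →L[ℝ] (Fin n → ℝ) →L[ℝ] ℝ) (p : (Fin n → ℝ) → ℝ)
    (β : (Fin n → ℝ) → (Fin n → ℝ) →L[ℝ] ℝ) (c : ℝ) (x u v : Fin n → ℝ) :
    red ω p β c x u v = Real.exp (-c * p x) *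
      (ω x u v - (fderiv ℝ p x u * β x v - fderiv ℝ p x v * β x u)) := by
  simp [red]; ring_nf

lemma red_sm {ω : (Fin n → ℝ) → (Fin n → ℝ) →L[ℝ] (Fin n → ℝ) →L[ℝ] ℝ} {p : (Fin n → ℝ) → ℝ}
    {β : (Fin n → ℝ) → (Fin n → ℝ) →L[ℝ] ℝ} (c : ℝ) {x₀ : Fin n → ℝ} (h : Sm ω x₀) (hp : Sm p x₀)
    (hβ : Sm β x₀) : Sm (red ω p β c) x₀ := by
  refine ((Sm.const (-c) _).mul hp).exp.smul (h.sub ((sm_smulRight ?_ hβ).sub (sm_smulRight hβ ?_)))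
  · exact Sm.fderiv hp
  · exact Sm.fderiv hp

lemma red_fderiv {ω : (Fin n → ℝ) → (Fin n → ℝ) →L[ℝ] (Fin n → ℝ) →L[ℝ] ℝ} {p : (Fin n → ℝ) → ℝ}
    {β : (Fin n → ℝ) → (Fin n → ℝ) →L[ℝ] ℝ} (c : ℝ) {x₀ : Fin n → ℝ} (h : Sm ω x₀) (hp : Sm p x₀)
    (hβ : Sm β x₀) : ∀ᶠ x in 𝓝 x₀, ∀ z u v, fderiv ℝ (red ω p β c) x z u v =
      Real.exp (-c * p x) * (-c * fderiv ℝ p x z *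
        (ω x u v - (fderiv ℝ p x u * β x v - fderiv ℝ p x v * β x u)) +
        (fderiv ℝ ω x z u v - (fderiv ℝ (fderiv ℝ p) x z u * β x v + fderiv ℝ p x u * fderiv ℝ β x z v
         - fderiv ℝ (fderiv ℝ p) x z v * β x u - fderiv ℝ p x v * fderiv ℝ β x z u))) := by
  have hp' : Sm (fderiv ℝ p) x₀ := Sm.fderiv hp
  filter_upwards [h.diff, hp.diff, hβ.diff, hp'.diff, (red_sm c h hp hβ).diff] with x h1 h2 h3 h4 h5 z u v
  rw [← fd_app2 h5]
  simp only [red_apply]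
  have e1 : HasFDerivAt (fun y => ω y u v) _ x :=
    (h1.hasFDerivAt.clm_apply (hasFDerivAt_const u x)).clm_apply (hasFDerivAt_const v x)
  have e2 (u : Fin n → ℝ) : HasFDerivAt (fun y => β y u) _ x := h3.hasFDerivAt.clm_apply (hasFDerivAt_const u x)
  have e3 (u : Fin n → ℝ) : HasFDerivAt (fun y => fderiv ℝ p y u) _ x :=
    h4.hasFDerivAt.clm_apply (hasFDerivAt_const u x)
  have e4 := (h2.hasFDerivAt.const_mul (-c)).exp.mul (e1.sub (((e3 u).mul (e2 v)).sub ((e3 v).mul (e2 u))))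
  refine (congrArg (fun L : (Fin n → ℝ) →L[ℝ] ℝ => L z) e4.fderiv).trans ?_
  simp
  ring

theorem red_PS {ω : (Fin n → ℝ) → (Fin n → ℝ) →L[ℝ] (Fin n → ℝ) →L[ℝ] ℝ} {p : (Fin n → ℝ) → ℝ}
    {β : (Fin n → ℝ) → (Fin n → ℝ) →L[ℝ] ℝ} (c : ℝ) {x₀ : Fin n → ℝ} {r : ℕ} (h : PS ω x₀ (2 * (r + 1)))
    (hp : Sm p x₀) (hβ : Sm β x₀)
    (hdβ : ∀ᶠ x in 𝓝 x₀, ∀ u v, fderiv ℝ β x u v - fderiv ℝ β x v u = c * ω x u v)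
    (hK : ∀ᶠ x in 𝓝 x₀, ∀ v, ω x v = 0 → β x v = 0)
    (hpB : ∀ᶠ x in 𝓝 x₀, ∀ v s, ω x v = s • β x → fderiv ℝ p x v = s) :
    PS (red ω p β c) x₀ (2 * r) := by
  refine ⟨red_sm c h.sm hp hβ, ?_, ?_, ?_⟩
  · filter_upwards [h.alt] with x h1 u v
    rw [red_apply, red_apply, h1 u v]; ring
  · filter_upwards [h.alt, h.closed, hdβ, red_fderiv c h.sm hp hβ, sm_symm hp] with x h1 h2 h3 h4 h5 u v z
    rw [h4, h4, h4]
    rw [h5 v u, h5 z u, h5 z v]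
    linear_combination Real.exp (-c * p x) * (h2 u v z + fderiv ℝ p x z * h3 u v
      + fderiv ℝ p x u * h3 v z + fderiv ℝ p x v * h3 z u)
  · filter_upwards [h.alt, h.rank, hK, hpB] with x h1 h2 h3 h4
    obtain ⟨X, hX⟩ := ann (ω x) h1 (β x) h3
    refine rank_drop (ω x) _ h1 (fderiv ℝ p x) (β x) X hX (fun v hv => h4 v 0 (by rw [hv, zero_smul]))
      (h4 X 1 (by rw [hX, one_smul])) _ (Real.exp_pos (-c * p x)).ne' (red_apply ω p β c x) r h2

lemma hom_d {p : (Fin n → ℝ) → ℝ} {x₀ : Fin n → ℝ} {w : Fin n → ℝ} {l : ℝ} (hp : Sm p x₀) 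
    (h : ∀ᶠ x in 𝓝 x₀, fderiv ℝ p x (dg w x) = l * p x) :
    ∀ᶠ x in 𝓝 x₀, ∀ u, fderiv ℝ (fderiv ℝ p) x (dg w x) u + fderiv ℝ p x (dg w u) = l * fderiv ℝ p x u := by
  have hp' : Sm (fderiv ℝ p) x₀ := Sm.fderiv hp
  filter_upwards [h.eventually_nhds, hp.diff, hp'.diff, sm_symm hp] with x h1 h2 h3 h4 u
  have := ev_fderiv_app h3.hasFDerivAt (dg w).hasFDerivAt (h2.hasFDerivAt.const_mul l) h1 u
  rw [h4 (dg w x) u, this]; simp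

theorem case1 (w : Fin n → ℝ) (wt : ℝ) (x₀ : Fin n → ℝ) (hw : dg w x₀ = 0) (r : ℕ) :
    ∀ ω : (Fin n → ℝ) → (Fin n → ℝ) →L[ℝ] (Fin n → ℝ) →L[ℝ] ℝ, PS ω x₀ (2 * r) → Hom ω x₀ w wt → 
    ∃ p q : Fin r → (Fin n → ℝ) → ℝ, (∀ i, Sm (p i) x₀) ∧ (∀ i, Sm (q i) x₀) ∧
      (∀ i, ∃ lam : ℝ, ∀ᶠ x in 𝓝 x₀, fderiv ℝ (p i) x (dg w x) = lam * p i x) ∧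
      (∀ i, ∃ lam : ℝ, ∀ᶠ x in 𝓝 x₀, fderiv ℝ (q i) x (dg w x) = lam * q i x) ∧
      ∀ᶠ x in 𝓝 x₀, ∀ u v, ω x u v = ∑ i, (fderiv ℝ (p i) x u * fderiv ℝ (q i) x v
          - fderiv ℝ (p i) x v * fderiv ℝ (q i) x u) := by
  induction r with
  | zero =>
    intro ω h hh
    refine ⟨Fin.elim0, Fin.elim0, fun i => i.elim0, fun i => i.elim0, fun i => i.elim0, fun i => i.elim0, ?_⟩
    filter_upwards [h.rank] with x hx u v
    have h1 : LinearMap.range (ω x).toLinearMap = ⊥ := Submodule.finrank_eq_zero.1 (by simpa using hx)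
    have h2 : (ω x).toLinearMap = 0 := LinearMap.range_eq_bot.1 h1
    have h3 : ω x u = 0 := congrArg (fun L => L u) h2
    rw [h3]; simp
  | succ r ih =>
    intro ω h hh
    obtain ⟨s, hs, hle, hsol⟩ := solveK ω x₀ _ h
    obtain ⟨i, hi⟩ : ∃ i, s i = 0 := by
      by_contra! h0
      have h1 : ∀ i, s i = 1 := fun i => (hs i).resolve_left (h0 i)
      have h2 : (dg s).toLinearMap = LinearMap.id := by
        ext v j; simp [h1]
      rw [h2, LinearMap.range_id, finrank_top] at hle
      have h3 := LinearMap.finrank_range_add_finrank_ker (ω x₀).toLinearMap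
      rw [h.rank.self_of_nhds] at h3
      omega
    obtain ⟨q, hq, hqK, hq0, hqh⟩ := hsol (fun x => x i) (contDiff_apply ℝ ℝ i)
    have hfi := fd_coord i
    have hqw := hqh w wt (w i) hw hh (fun x => by rw [hfi]; rfl)
    have hq' : Sm (fderiv ℝ q) x₀ := Sm.fderiv hq
    have hne : fderiv ℝ q x₀ ≠ 0 := by
      have h1 := (fderiv_on_S (dg s) q (fun x => x i) x₀ hq (contDiff_apply ℝ ℝ i) hq0).self_of_nhds
        (by simp; rfl) (Pi.single i 1) (by
          ext j
          by_cases hj : j = i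
          · subst hj; simp [hi]
          · simp [hj])
      rw [hfi] at h1
      intro h0
      rw [h0] at h1; simp at h1
    have hdβ : ∀ᶠ x in 𝓝 x₀, ∀ u v, fderiv ℝ (fderiv ℝ q) x u v - fderiv ℝ (fderiv ℝ q) x v u = 0 * ω x u v := by
      filter_upwards [sm_symm hq] with x h1 u v
      rw [h1 u v]; ring
    obtain ⟨p, hp, hpB, hph⟩ := solveB ω x₀ _ h (fderiv ℝ q) hq' 0 hdβ hqK hne
    have hpw := hph w wt (w i) hw hh (hom_d hq hqw)
    have hred := red_PS 0 h hp hq' hdβ hqK hpB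
    have hredh : Hom (red ω p (fderiv ℝ q) 0) x₀ w wt := by
      unfold Hom
      filter_upwards [hh, red_fderiv 0 h.sm hp hq', hom_d hq hqw, hom_d hp hpw] with x h1 h2 h3 h4 u v
      rw [h2, red_apply, red_apply, red_apply]
      have e : Real.exp (-0 * p x) = 1 := by simp
      rw [e]
      linear_combination h1 u v - fderiv ℝ q x v * h4 u - fderiv ℝ p x u * h3 v
        + fderiv ℝ q x u * h4 v + fderiv ℝ p x v * h3 u
    obtain ⟨P, Q, hP, hQ, hPw, hQw, hPQ⟩ := ih _ hred hredh
    refine ⟨Fin.cons p P, Fin.cons q Q, ?_, ?_, ?_, ?_, ?_⟩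
    · intro j; refine Fin.cases ?_ ?_ j
      · exact hp
      · exact hP
    · intro j; refine Fin.cases ?_ ?_ j
      · exact hq
      · exact hQ
    · intro j; refine Fin.cases ?_ ?_ j
      · exact ⟨_, hpw⟩
      · exact hPw
    · intro j; refine Fin.cases ?_ ?_ j
      · exact ⟨_, hqw⟩
      · exact hQw
    · filter_upwards [hPQ] with x h1 u v
      rw [Fin.sum_univ_succ]
      simp only [Fin.cons_zero, Fin.cons_succ]
      rw [← h1, red_apply]
      simp
end I
end HD


namespace HD
section K
open scoped Topology
open Set Filter
variable {n : ℕ}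

lemma poincare (γ : (Fin n → ℝ) → (Fin n → ℝ) →L[ℝ] ℝ) (x₀ : Fin n → ℝ) (h : Sm γ x₀)
    (hs : ∀ᶠ x in 𝓝 x₀, ∀ u v, fderiv ℝ γ x u v = fderiv ℝ γ x v u) :
    ∃ f : (Fin n → ℝ) → ℝ, Sm f x₀ ∧ ∀ᶠ x in 𝓝 x₀, ∀ v, fderiv ℝ f x v = γ x v := by
  obtain ⟨f, hf, h1, -⟩ := solver (ContinuousLinearMap.id ℝ (Fin n → ℝ)) (fun _ => rfl)
    (fun _ => ContinuousLinearMap.id ℝ (Fin n → ℝ)) γ x₀ (Sm.const _ _) h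
    (Eventually.of_forall fun _ _ => rfl) (Eventually.of_forall fun _ _ => rfl)
    (Eventually.of_forall fun _ _ => rfl) (Eventually.of_forall fun x v₁ v₂ => by
      rw [(hasFDerivAt_const (ContinuousLinearMap.id ℝ (Fin n → ℝ)) x).fderiv]; rfl)
    (hs.mono fun x hx v₁ v₂ => hx v₁ v₂) (fun _ => 0) contDiff_const
  exact ⟨f, hf, h1⟩

lemma kill {E : Type} [NormedAddCommGroup E] [NormedSpace ℝ E] {r : ℕ} (p q : Fin r → E →L[ℝ] ℝ)
    (h : LinearIndependent ℝ (Sum.elim q p : Fin r ⊕ Fin r → E →L[ℝ] ℝ)) (X : E)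
    (hX : ∀ v, ∑ i, (p i X * q i v - p i v * q i X) = 0) (i : Fin r) : p i X = 0 ∧ q i X = 0 := by
  have h1 := Fintype.linearIndependent_iff.1 h (Sum.elim (fun i => p i X) (fun i => - q i X)) (by
    ext v
    have := hX v
    rw [Fintype.sum_sum_type]
    simp only [Sum.elim_inl, Sum.elim_inr, ContinuousLinearMap.add_apply, ContinuousLinearMap.sum_apply,
      ContinuousLinearMap.smul_apply, smul_eq_mul, ContinuousLinearMap.zero_apply]
    rw [← this, ← Finset.sum_add_distrib]
    refine Finset.sum_congr rfl fun j _ => ?_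
    ring)
  have h2 := h1 (Sum.inl i)
  have h3 := h1 (Sum.inr i)
  simp at h2 h3
  exact ⟨h2, h3⟩

lemma beta_d {ω : (Fin n → ℝ) → (Fin n → ℝ) →L[ℝ] (Fin n → ℝ) →L[ℝ] ℝ} {x₀ : Fin n → ℝ} {k : ℕ}
    (h : PS ω x₀ k) (w : Fin n → ℝ) (wt : ℝ) (hh : Hom ω x₀ w wt) :
    ∀ᶠ x in 𝓝 x₀, ∀ u v, fderiv ℝ (fun y => ω y (dg w y)) x u v - fderiv ℝ (fun y => ω y (dg w y)) x v u
      = wt * ω x u v := by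
  filter_upwards [h.sm.diff, h.alt.eventually_nhds, h.closed, hh] with x h1 h2 h3 h4 u v
  have hd : fderiv ℝ (fun y => ω y (dg w y)) x = _ := (h1.hasFDerivAt.clm_apply (dg w).hasFDerivAt).fderiv
  have e1 := alt_fderiv h1 h2 v u (dg w x)
  have e2 := alt_fderiv h1 h2 (dg w x) u v
  have e3 := h3 u (dg w x) v
  have e4 := h4 u v
  have e5 := h2.self_of_nhds (dg w v) u
  rw [hd]
  simp only [ContinuousLinearMap.add_apply, ContinuousLinearMap.comp_apply, ContinuousLinearMap.flip_apply]
  linarith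

theorem case2 (w : Fin n → ℝ) (wt : ℝ) (x₀ : Fin n → ℝ) (r : ℕ)
    (ω : (Fin n → ℝ) → (Fin n → ℝ) →L[ℝ] (Fin n → ℝ) →L[ℝ] ℝ) (h : PS ω x₀ (2 * (r + 1)))
    (hh : Hom ω x₀ w wt) (h0 : ω x₀ (dg w x₀) ≠ 0) :
    ∃ p q : Fin (r + 1) → (Fin n → ℝ) → ℝ, (∀ i, Sm (p i) x₀) ∧ (∀ i, Sm (q i) x₀) ∧
      (∀ i, ∃ lam : ℝ, ∀ᶠ x in 𝓝 x₀, fderiv ℝ (p i) x (dg w x) = lam * p i x) ∧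
      (∀ i, ∃ lam : ℝ, ∀ᶠ x in 𝓝 x₀, fderiv ℝ (q i) x (dg w x) = lam * q i x) ∧
      ∀ᶠ x in 𝓝 x₀, ∀ u v, ω x u v = ∑ i, (fderiv ℝ (p i) x u * fderiv ℝ (q i) x v
          - fderiv ℝ (p i) x v * fderiv ℝ (q i) x u) := by
  obtain ⟨β, hβe⟩ : ∃ β : (Fin n → ℝ) → (Fin n → ℝ) →L[ℝ] ℝ, β = fun y => ω y (dg w y) := ⟨_, rfl⟩
  have hdβ := beta_d h w wt hh
  rw [← hβe] at hdβ
  have hβa : ∀ x, β x = ω x (dg w x) := fun x => by rw [hβe]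
  have hβ : Sm β x₀ := by
    rw [hβe]
    exact h.sm.clm_apply (Sm.of_contDiff (dg w).contDiff x₀)
  have hK : ∀ᶠ x in 𝓝 x₀, ∀ v, ω x v = 0 → β x v = 0 := by
    filter_upwards [h.alt] with x h1 v hv
    rw [hβa, h1, hv]; simp
  obtain ⟨T, hT, hTB, -⟩ := solveB ω x₀ _ h β hβ wt hdβ hK (by rw [hβa]; exact h0)
  have hT1 : ∀ᶠ x in 𝓝 x₀, fderiv ℝ T x (dg w x) = 1 := by
    filter_upwards [hTB] with x h1
    exact h1 _ 1 (by rw [hβa, one_smul])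
  have hβ1 : ∀ᶠ x in 𝓝 x₀, β x (dg w x) = 0 := by
    filter_upwards [h.alt] with x h1
    have := h1 (dg w x) (dg w x)
    rw [hβa]; linarith
  have hred := red_PS wt h hT hβ hdβ hK hTB
  have hz : ∀ v : Fin n → ℝ, dg (0 : Fin n → ℝ) v = 0 := fun v => by ext j; simp
  obtain ⟨P, Q, hP, hQ, -, -, hPQ⟩ := case1 (0 : Fin n → ℝ) 0 x₀ (hz _) r _ hred
    (Eventually.of_forall fun x u v => by rw [hz, hz, hz]; simp)
  have hPQ0 : ∀ᶠ x in 𝓝 x₀, ∀ i, fderiv ℝ (P i) x (dg w x) = 0 ∧ fderiv ℝ (Q i) x (dg w x) = 0 := by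
    filter_upwards [hPQ, hred.rank, hβ1, hT1] with x h1 h2 h3 h4
    refine kill _ _ (indep_of_rank _ (fun i => fderiv ℝ (P i) x) (fun i => fderiv ℝ (Q i) x) h1 h2) _ ?_
    intro v
    have := h1 (dg w x) v
    rw [← this, red_apply, h3, h4, hβa]; ring
  have hdP : ∀ᶠ x in 𝓝 x₀, ∀ i, DifferentiableAt ℝ (P i) x := eventually_all.2 fun i => (hP i).diff
  have hdQ : ∀ᶠ x in 𝓝 x₀, ∀ i, DifferentiableAt ℝ (Q i) x := eventually_all.2 fun i => (hQ i).diff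
  by_cases hwt : wt = 0
  · subst hwt
    obtain ⟨H, hH, hHβ⟩ := poincare β x₀ hβ (by
      filter_upwards [hdβ] with x h1 u v
      have := h1 u v
      linarith)
    have d1 : ∀ᶠ x in 𝓝 x₀, ∀ v, fderiv ℝ (fun x => Real.exp (T x)) x v = Real.exp (T x) * fderiv ℝ T x v := by
      filter_upwards [hT.diff] with x h1 v
      rw [h1.hasFDerivAt.exp.fderiv]; simp
    have d2 : ∀ᶠ x in 𝓝 x₀, ∀ v, fderiv ℝ (fun x => H x * Real.exp (- T x)) x v =
        Real.exp (- T x) * (β x v - H x * fderiv ℝ T x v) := by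
      filter_upwards [hT.diff, hH.diff, hHβ] with x h1 h2 h3 v
      have e : HasFDerivAt (fun x => H x * Real.exp (- T x)) _ x := h2.hasFDerivAt.mul h1.hasFDerivAt.neg.exp
      rw [e.fderiv, ← h3]; simp; ring
    refine ⟨Fin.cons (fun x => Real.exp (T x)) P, Fin.cons (fun x => H x * Real.exp (- T x)) Q, ?_, ?_, ?_, ?_, ?_⟩
    · intro j; refine Fin.cases ?_ ?_ j
      · exact hT.exp
      · exact hP
    · intro j; refine Fin.cases ?_ ?_ j
      · exact hH.mul hT.neg.exp
      · exact hQ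
    · intro j; refine Fin.cases ?_ ?_ j
      · refine ⟨1, ?_⟩
        filter_upwards [d1, hT1] with x h1 h2
        rw [Fin.cons_zero, h1, h2]; ring
      · intro i; refine ⟨0, ?_⟩
        filter_upwards [hPQ0] with x h1
        rw [Fin.cons_succ, (h1 i).1]; ring
    · intro j; refine Fin.cases ?_ ?_ j
      · refine ⟨-1, ?_⟩
        filter_upwards [d2, hT1, hβ1] with x h1 h2 h3
        rw [Fin.cons_zero, h1, h2, h3]; ring
      · intro i; refine ⟨0, ?_⟩
        filter_upwards [hPQ0] with x h1
        rw [Fin.cons_succ, (h1 i).2]; ring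
    · filter_upwards [hPQ, d1, d2] with x h1 h2 h3 u v
      rw [Fin.sum_univ_succ]
      simp only [Fin.cons_zero, Fin.cons_succ]
      rw [← h1, red_apply, h2, h2, h3, h3]
      have e1 : Real.exp (T x) * Real.exp (- T x) = 1 := by rw [← Real.exp_add]; simp
      have e2 : Real.exp (-0 * T x) = 1 := by simp
      rw [e2]
      linear_combination (fderiv ℝ T x v * β x u - fderiv ℝ T x u * β x v) * e1
  · obtain ⟨γ, hγe⟩ : ∃ γ : (Fin n → ℝ) → (Fin n → ℝ) →L[ℝ] ℝ,
      γ = fun x => (Real.exp (-wt * T x) * wt⁻¹) • β x - ∑ i, P i x • fderiv ℝ (Q i) x := ⟨_, rfl⟩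
    have hγ : Sm γ x₀ := by
      rw [hγe]
      refine ((((Sm.const (-wt) _).mul hT).exp.mul (Sm.const _ _)).smul hβ).sub (Sm.sum fun i => (hP i).smul ?_)
      exact Sm.fderiv (hQ i)
    have hγa : ∀ x v, γ x v = Real.exp (-wt * T x) * wt⁻¹ * β x v - ∑ i, P i x * fderiv ℝ (Q i) x v := by
      intro x v
      rw [hγe]; simp
    have hddQ : ∀ᶠ x in 𝓝 x₀, ∀ i, DifferentiableAt ℝ (fderiv ℝ (Q i)) x :=
      eventually_all.2 fun i => Sm.diff (Sm.fderiv (hQ i))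
    have hsQ : ∀ᶠ x in 𝓝 x₀, ∀ i, ∀ u v, fderiv ℝ (fderiv ℝ (Q i)) x u v = fderiv ℝ (fderiv ℝ (Q i)) x v u :=
      eventually_all.2 fun i => sm_symm (hQ i)
    have hγd : ∀ᶠ x in 𝓝 x₀, ∀ u v, fderiv ℝ γ x u v =
        Real.exp (-wt * T x) * wt⁻¹ * (fderiv ℝ β x u v - wt * fderiv ℝ T x u * β x v)
        - ∑ i, (fderiv ℝ (P i) x u * fderiv ℝ (Q i) x v + P i x * fderiv ℝ (fderiv ℝ (Q i)) x u v) := by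
      filter_upwards [hγ.diff, hT.diff, hβ.diff, hdP, hdQ, hddQ] with x h1 h2 h3 h4 h5 h6 u v
      rw [← fd_app h1]
      have e2 : HasFDerivAt (fun y => β y v) _ x := h3.hasFDerivAt.clm_apply (hasFDerivAt_const v x)
      have e3 (i : Fin r) : HasFDerivAt (fun y => fderiv ℝ (Q i) y v) _ x :=
        (h6 i).hasFDerivAt.clm_apply (hasFDerivAt_const v x)
      have e4 := (((h2.hasFDerivAt.const_mul (-wt)).exp.mul_const wt⁻¹).mul e2).sub
        (HasFDerivAt.fun_sum (u := Finset.univ) fun i _ => (h4 i).hasFDerivAt.mul (e3 i))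
      have e5 : HasFDerivAt (fun y => γ y v) _ x := e4.congr_of_eventuallyEq
        (Eventually.of_forall fun y => hγa y v)
      rw [e5.fderiv]
      simp only [ContinuousLinearMap.sub_apply, ContinuousLinearMap.sum_apply]
      congr 1
      · simp; ring
      · refine Finset.sum_congr rfl fun i _ => ?_
        simp; ring
    obtain ⟨s, hs, hsγ⟩ := poincare γ x₀ hγ (by
      filter_upwards [hγd, hdβ, hPQ, hsQ] with x h1 h2 h3 h4 u v
      have e1 := h3 u v
      rw [red_apply] at e1
      rw [h1, h1, ← sub_eq_zero]
      have e2 : ∑ i, (fderiv ℝ (P i) x u * fderiv ℝ (Q i) x v + P i x * fderiv ℝ (fderiv ℝ (Q i)) x u v)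
          - ∑ i, (fderiv ℝ (P i) x v * fderiv ℝ (Q i) x u + P i x * fderiv ℝ (fderiv ℝ (Q i)) x v u) = 
          ∑ i, (fderiv ℝ (P i) x u * fderiv ℝ (Q i) x v - fderiv ℝ (P i) x v * fderiv ℝ (Q i) x u) := by
        rw [← Finset.sum_sub_distrib]
        refine Finset.sum_congr rfl fun i _ => ?_
        rw [h4 i u v]; ring
      rw [← e1] at e2
      have e3 : wt⁻¹ * wt = 1 := inv_mul_cancel₀ hwt
      linear_combination - e2 + Real.exp (-wt * T x) * wt⁻¹ * h2 u v + Real.exp (-wt * T x) *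
        (ω x u v - (fderiv ℝ T x u * β x v - fderiv ℝ T x v * β x u)) * e3)
    have hs0 : ∀ᶠ x in 𝓝 x₀, fderiv ℝ s x (dg w x) = 0 := by
      filter_upwards [hsγ, hβ1, hPQ0] with x h1 h2 h3
      rw [h1, hγa, h2, Finset.sum_eq_zero fun i _ => by rw [(h3 i).2, mul_zero]]; simp
    have d1 : ∀ᶠ x in 𝓝 x₀, ∀ v, fderiv ℝ (fun x => Real.exp (wt * T x)) x v =
        Real.exp (wt * T x) * (wt * fderiv ℝ T x v) := by
      filter_upwards [hT.diff] with x h1 v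
      rw [(h1.hasFDerivAt.const_mul wt).exp.fderiv]; simp
    have d2 : ∀ᶠ x in 𝓝 x₀, ∀ i v, fderiv ℝ (fun x => Real.exp (wt * T x) * P i x) x v =
        Real.exp (wt * T x) * (wt * P i x * fderiv ℝ T x v + fderiv ℝ (P i) x v) := by
      filter_upwards [hT.diff, hdP] with x h1 h2 i v
      have e : HasFDerivAt (fun x => Real.exp (wt * T x) * P i x) _ x :=
        (h1.hasFDerivAt.const_mul wt).exp.mul (h2 i).hasFDerivAt
      rw [e.fderiv]; simp; ring
    refine ⟨Fin.cons (fun x => Real.exp (wt * T x)) (fun i x => Real.exp (wt * T x) * P i x), Fin.cons s Q,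
      ?_, ?_, ?_, ?_, ?_⟩
    · intro j; refine Fin.cases ?_ ?_ j
      · exact ((Sm.const wt _).mul hT).exp
      · exact fun i => ((Sm.const wt _).mul hT).exp.mul (hP i)
    · intro j; refine Fin.cases ?_ ?_ j
      · exact hs
      · exact hQ
    · intro j; refine Fin.cases ?_ ?_ j
      · refine ⟨wt, ?_⟩
        filter_upwards [d1, hT1] with x h1 h2
        rw [Fin.cons_zero, h1, h2]; ring
      · intro i; refine ⟨wt, ?_⟩
        filter_upwards [d2, hPQ0, hT1] with x h1 h2 h3
        rw [Fin.cons_succ, h1, (h2 i).1, h3]; ring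
    · intro j; refine Fin.cases ?_ ?_ j
      · refine ⟨0, ?_⟩
        filter_upwards [hs0] with x h1
        rw [Fin.cons_zero, h1]; ring
      · intro i; refine ⟨0, ?_⟩
        filter_upwards [hPQ0] with x h1
        rw [Fin.cons_succ, (h1 i).2]; ring
    · filter_upwards [hPQ, d1, d2, hsγ] with x h1 h2 h3 h4 u v
      have e0 := h1 u v
      rw [red_apply] at e0
      rw [Fin.sum_univ_succ]
      simp only [Fin.cons_zero, Fin.cons_succ]
      simp only [h2, h3, h4, hγa]
      have e1 : Real.exp (wt * T x) * Real.exp (-wt * T x) = 1 := by rw [← Real.exp_add]; simp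
      have e3 : wt⁻¹ * wt = 1 := inv_mul_cancel₀ hwt
      have e4 : ∑ i, (Real.exp (wt * T x) * (wt * P i x * fderiv ℝ T x u + fderiv ℝ (P i) x u) * fderiv ℝ (Q i) x v
         - Real.exp (wt * T x) * (wt * P i x * fderiv ℝ T x v + fderiv ℝ (P i) x v) * fderiv ℝ (Q i) x u) =
         Real.exp (wt * T x) * ((∑ i, (fderiv ℝ (P i) x u * fderiv ℝ (Q i) x v - fderiv ℝ (P i) x v * fderiv ℝ (Q i) x u))
          + wt * fderiv ℝ T x u * (∑ i, P i x * fderiv ℝ (Q i) x v)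
          - wt * fderiv ℝ T x v * (∑ i, P i x * fderiv ℝ (Q i) x u)) := by
        rw [Finset.mul_sum, Finset.mul_sum, ← Finset.sum_add_distrib, ← Finset.sum_sub_distrib, Finset.mul_sum]
        refine Finset.sum_congr rfl fun i _ => ?_
        ring
      rw [e4, ← e0]
      generalize Real.exp (wt * T x) = A at *
      generalize Real.exp (-wt * T x) = B at *
      generalize (∑ i, P i x * fderiv ℝ (Q i) x v) = S at *
      generalize (∑ i, P i x * fderiv ℝ (Q i) x u) = S' at *
      linear_combination (-ω x u v) * e1 + A * B * (fderiv ℝ T x v * β x u - fderiv ℝ T x u * β x v) * e3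
end K
end HD


namespace HD
section J
open scoped Topology
open Set Filter
variable {n : ℕ}

lemma complete {M ι : Type} [AddCommGroup M] [Module ℝ M] [FiniteDimensional ℝ M] [Fintype ι]
    (c : ι → M) (hc : LinearIndependent ℝ c) (e : Fin n → M) (he : Submodule.span ℝ (range e) = ⊤) (m : ℕ)
    (hm : Module.finrank ℝ M - Fintype.card ι = m) :
    ∃ a : Fin m → Fin n, LinearIndependent ℝ (Sum.elim c (e ∘ a)) := by
  let N : Submodule ℝ M := Submodule.span ℝ (range c)
  obtain ⟨κ, a, ha, hsp, hli⟩ := exists_linearIndependent' ℝ (fun i : Fin n => N.mkQ (e i))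
  haveI : Finite κ := Finite.of_injective a ha
  haveI := Fintype.ofFinite κ
  have h1 : Submodule.span ℝ (range ((fun i : Fin n => N.mkQ (e i)) ∘ a)) = ⊤ := by
    rw [hsp]
    have : (fun i : Fin n => N.mkQ (e i)) = N.mkQ ∘ e := rfl
    rw [this, range_comp, Submodule.span_image, he, Submodule.map_top, Submodule.range_mkQ]
  have h2 : Fintype.card κ = Module.finrank ℝ (M ⧸ N) := by
    rw [← finrank_span_eq_card hli, h1, finrank_top]
  have h3 := N.finrank_quotient_add_finrank
  have h4 : Module.finrank ℝ N = Fintype.card ι := finrank_span_eq_card hc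
  let eq : Fin m ≃ κ := (Fintype.equivFinOfCardEq (by omega)).symm
  refine ⟨a ∘ eq, ?_⟩
  have h5 : LinearIndependent ℝ (fun i : ι => (⟨c i, Submodule.subset_span ⟨i, rfl⟩⟩ : N)) :=
    LinearIndependent.of_comp N.subtype hc
  refine LinearIndependent.sumElim_of_quotient h5 (e ∘ (a ∘ eq)) ?_
  exact hli.comp eq eq.injective

lemma span_proj : Submodule.span ℝ (range fun i : Fin n =>
    (ContinuousLinearMap.proj (R := ℝ) (φ := fun _ : Fin n => ℝ) i : (Fin n → ℝ) →L[ℝ] ℝ)) = ⊤ := by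
  rw [eq_top_iff]
  rintro f -
  have : f = ∑ i, f (Pi.single i 1) • (ContinuousLinearMap.proj (R := ℝ) (φ := fun _ : Fin n => ℝ) i) := by
    ext v
    conv_lhs => rw [pi_eq_sum_univ' v]
    simp [ContinuousLinearMap.sum_apply, mul_comm]
  rw [this]
  exact Submodule.sum_mem _ fun i _ => Submodule.smul_mem _ _ (Submodule.subset_span ⟨i, rfl⟩)

lemma finrank_dual' : Module.finrank ℝ ((Fin n → ℝ) →L[ℝ] ℝ) = n := by
  have e : ((Fin n → ℝ) →L[ℝ] ℝ) ≃ₗ[ℝ] ((Fin n → ℝ) →ₗ[ℝ] ℝ) := LinearMap.toContinuousLinearMap.symm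
  rw [e.finrank_eq, Module.finrank_linearMap]; simp

theorem both (w : Fin n → ℝ) (wt : ℝ) (x₀ : Fin n → ℝ) (r : ℕ)
    (ω : (Fin n → ℝ) → (Fin n → ℝ) →L[ℝ] (Fin n → ℝ) →L[ℝ] ℝ) (h : PS ω x₀ (2 * r))
    (hh : Hom ω x₀ w wt) (h0 : dg w x₀ = 0 ∨ ω x₀ (dg w x₀) ≠ 0) :
    ∃ p q : Fin r → (Fin n → ℝ) → ℝ, (∀ i, Sm (p i) x₀) ∧ (∀ i, Sm (q i) x₀) ∧
      (∀ i, ∃ lam : ℝ, ∀ᶠ x in 𝓝 x₀, fderiv ℝ (p i) x (dg w x) = lam * p i x) ∧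
      (∀ i, ∃ lam : ℝ, ∀ᶠ x in 𝓝 x₀, fderiv ℝ (q i) x (dg w x) = lam * q i x) ∧
      ∀ᶠ x in 𝓝 x₀, ∀ u v, ω x u v = ∑ i, (fderiv ℝ (p i) x u * fderiv ℝ (q i) x v
          - fderiv ℝ (p i) x v * fderiv ℝ (q i) x u) := by
  rcases h0 with h0 | h0
  · exact case1 w wt x₀ h0 r ω h hh
  · cases r with
    | zero =>
      exfalso
      apply h0
      have hx := h.rank.self_of_nhds
      have h1 : LinearMap.range (ω x₀).toLinearMap = ⊥ := Submodule.finrank_eq_zero.1 (by simpa using hx)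
      have h2 : (ω x₀).toLinearMap = 0 := LinearMap.range_eq_bot.1 h1
      exact congrArg (fun L => L (dg w x₀)) h2
    | succ r => exact case2 w wt x₀ r ω h hh h0

end J
end HD

theorem stmt_11 (n r : ℕ) (w : Fin n → ℝ) (wt : ℝ)
    (U : Set (Fin n → ℝ)) (hU : IsOpen U)
    (ω : (Fin n → ℝ) → (Fin n → ℝ) →L[ℝ] (Fin n → ℝ) →L[ℝ] ℝ)
    (hsm : ContDiffOn ℝ (⊤ : ℕ∞) ω U)
    (halt : ∀ x ∈ U, ∀ u v, ω x u v = - ω x v u)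
    (hclosed : ∀ x ∈ U, ∀ u v z,
      fderiv ℝ ω x u v z + fderiv ℝ ω x v z u + fderiv ℝ ω x z u v = 0)
    (hrank : ∀ x ∈ U,
      Module.finrank ℝ (LinearMap.range (ω x).toLinearMap) = 2 * r)
    (hhom : ∀ x ∈ U, ∀ u v,
      fderiv ℝ ω x (fun j => w j * x j) u v
        + ω x (fun j => w j * u j) v + ω x u (fun j => w j * v j) = wt * ω x u v)
    (x₀ : Fin n → ℝ) (hx₀ : x₀ ∈ U)
    (hcase : (fun j => w j * x₀ j) = 0 ∨
      ((fun j => w j * x₀ j) ≠ 0 ∧ ω x₀ (fun j => w j * x₀ j) ≠ 0)) :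
    ∃ (V : Set (Fin n → ℝ)) (q p : Fin r → (Fin n → ℝ) → ℝ)
      (z : Fin (n - 2 * r) → (Fin n → ℝ) → ℝ),
      IsOpen V ∧ x₀ ∈ V ∧ V ⊆ U ∧
      (∀ i, ContDiffOn ℝ (⊤ : ℕ∞) (q i) V) ∧ (∀ i, ContDiffOn ℝ (⊤ : ℕ∞) (p i) V) ∧
      (∀ a, ContDiffOn ℝ (⊤ : ℕ∞) (z a) V) ∧
      (∀ y ∈ V, LinearIndependent ℝ
        (Sum.elim (fun i => fderiv ℝ (q i) y)
          (Sum.elim (fun i => fderiv ℝ (p i) y) (fun a => fderiv ℝ (z a) y)) :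
          Fin r ⊕ (Fin r ⊕ Fin (n - 2 * r)) → (Fin n → ℝ) →L[ℝ] ℝ)) ∧
      (∀ i, ∃ lam : ℝ, ∀ y ∈ V,
        fderiv ℝ (q i) y (fun j => w j * y j) = lam * q i y) ∧
      (∀ i, ∃ lam : ℝ, ∀ y ∈ V,
        fderiv ℝ (p i) y (fun j => w j * y j) = lam * p i y) ∧
      (∀ a, ∃ lam : ℝ, ∀ y ∈ V,
        fderiv ℝ (z a) y (fun j => w j * y j) = lam * z a y) ∧
      (∀ y ∈ V, ∀ u v, ω y u v =
        ∑ i, (fderiv ℝ (p i) y u * fderiv ℝ (q i) y v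
          - fderiv ℝ (p i) y v * fderiv ℝ (q i) y u)) := by
  have hUn : ∀ᶠ x in nhds x₀, x ∈ U := hU.mem_nhds hx₀
  have hPS : HD.PS ω x₀ (2 * r) :=
    ⟨hUn.mono fun x hx => hsm.contDiffAt (hU.mem_nhds hx), hUn.mono halt, hUn.mono hclosed, hUn.mono hrank⟩
  have hHom : HD.Hom ω x₀ w wt := hUn.mono hhom
  obtain ⟨p, q, hp, hq, hpw, hqw, hpq⟩ := HD.both w wt x₀ r ω hPS hHom (hcase.imp id fun h => h.2)
  choose lp hlp using hpw
  choose lq hlq using hqw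
  have hli := HD.indep_of_rank _ (fun i => fderiv ℝ (p i) x₀) (fun i => fderiv ℝ (q i) x₀)
    hpq.self_of_nhds hPS.rank.self_of_nhds
  obtain ⟨a, ha⟩ := HD.complete _ hli _ (HD.span_proj (n := n)) (n - 2 * r) (by
    rw [HD.finrank_dual']; simp; omega)
  have hz : ∀ (i : Fin n) (y : Fin n → ℝ), fderiv ℝ (fun x : Fin n → ℝ => x i) y =
      ContinuousLinearMap.proj (R := ℝ) (φ := fun _ : Fin n => ℝ) i := fun i y => by
    ext v; rw [HD.fd_coord]; rfl
  have ha' : LinearIndependent ℝ (Sum.elim (fun i => fderiv ℝ (q i) x₀)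
          (Sum.elim (fun i => fderiv ℝ (p i) x₀) (fun b => fderiv ℝ (fun x : Fin n → ℝ => x (a b)) x₀)) :
          Fin r ⊕ (Fin r ⊕ Fin (n - 2 * r)) → (Fin n → ℝ) →L[ℝ] ℝ) := by
    have := ha.comp (Equiv.sumAssoc (Fin r) (Fin r) (Fin (n - 2 * r))).symm (Equiv.injective _)
    refine Eq.mp (congrArg (fun f => LinearIndependent ℝ f) ?_) this
    funext j
    rcases j with j | j | j
    · rfl
    · rfl
    · exact (hz (a j) x₀).symm
  have hcont : ContinuousAt (fun y => (Sum.elim (fun i => fderiv ℝ (q i) y)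
          (Sum.elim (fun i => fderiv ℝ (p i) y) (fun b => fderiv ℝ (fun x : Fin n → ℝ => x (a b)) y)) :
          Fin r ⊕ (Fin r ⊕ Fin (n - 2 * r)) → (Fin n → ℝ) →L[ℝ] ℝ)) x₀ := by
    rw [continuousAt_pi]
    rintro (j | j | j)
    · exact HD.Sm.continuousAt (HD.Sm.fderiv (hq j))
    · exact HD.Sm.continuousAt (HD.Sm.fderiv (hp j))
    · simp only [Sum.elim_inr, hz]
      exact continuousAt_const
  have hev := hcont.eventually ha'.eventually
  have hall := hUn.and (hev.and ((Filter.eventually_all.2 hp).and ((Filter.eventually_all.2 hq).and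
    ((Filter.eventually_all.2 hlp).and ((Filter.eventually_all.2 hlq).and hpq)))))
  obtain ⟨V, hV, hVo, hxV⟩ := eventually_nhds_iff.1 hall
  refine ⟨V, q, p, fun b x => x (a b), hVo, hxV, fun x hx => (hV x hx).1, ?_, ?_, ?_, ?_, ?_, ?_, ?_, ?_⟩
  · exact fun i x hx => ((hV x hx).2.2.2.1 i).contDiffWithinAt
  · exact fun i x hx => ((hV x hx).2.2.1 i).contDiffWithinAt
  · exact fun b => (contDiff_apply ℝ ℝ (a b)).contDiffOn
  · exact fun x hx => (hV x hx).2.1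
  · exact fun i => ⟨lq i, fun x hx => (hV x hx).2.2.2.2.2.1 i⟩
  · exact fun i => ⟨lp i, fun x hx => (hV x hx).2.2.2.2.1 i⟩
  · exact fun b => ⟨w (a b), fun x hx => by rw [HD.fd_coord]⟩
  · exact fun x hx => (hV x hx).2.2.2.2.2.2
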